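/- For every sentence C, the colored ribbon function expands positively into the colored immaculate basis as R_C = Σ_J L_{J,C} 𝔖_J, where the sum runs over all sentences J with |J| = |C| and L_{J,C} is the number of standard colored immaculate tableaux of shape J with colored descent composition C. -/

import Mathlib

open scoped BigOperators

namespace ColoredImm

variable {A : Type*}

/-- A *weak sentence* over the alphabet `A`: a finite list of words (words may be empty). -/
abbrev Sentence (A : Type*) := List (List A)

/-- A genuine *sentence*: all of its words are nonempty. -/
def IsSentence (I : Sentence A) : Prop := ∀ w ∈ I, w ≠ []

/-- The size `|I|` of a sentence: its total number of letters. -/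
def size (I : Sentence A) : ℕ := (I.map List.length).sum

/-- The word lengths `wℓ(I)` of a sentence. -/
def wl (I : Sentence A) : List ℕ := I.map List.length

/-- The flattening of a weak sentence: delete all empty words. -/
def flattenWS (I : Sentence A) : Sentence A := I.filter (fun w => !w.isEmpty)

/-- `Refines J I` means `J ⪯ I`: the sentence `I` can be obtained by concatenating
some adjacent words of `J` (so `J` is a refinement of `I`, and `I` a coarsening of `J`). -/
def Refines (J I : Sentence A) : Prop :=
  ∃ P : List (Sentence A), (∀ p ∈ P, p ≠ []) ∧ P.flatten = J ∧ P.map List.flatten = I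

/-! ### Fillings and colored immaculate tableaux -/

/-- An integer filling of a diagram, recorded row by row. -/
abbrev Filling := List (List ℕ)

/-- The entry of a filling at box `b = (row, column)` (0-indexed), with default `0`. -/
def entryAt (f : Filling) (b : ℕ × ℕ) : ℕ := (f.getD b.1 []).getD b.2 0

/-- `IsCIT I f`: `f` is a colored immaculate tableau of shape `I`; that is, `f` has the
same shape as the colored composition diagram of `I`, its entries are positive integers
weakly increasing left to right along each row, and the entries in the first column are
strictly increasing from top to bottom. -/
def IsCIT (I : Sentence A) (f : Filling) : Prop :=
  f.map List.length = I.map List.length ∧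
  (∀ row ∈ f, row.Chain' (· ≤ ·)) ∧
  (f.filterMap List.head?).Chain' (· < ·) ∧
  (∀ x ∈ f.flatten, 1 ≤ x)

/-- The colors (letters of `w`) of the boxes of one row whose entry (in `row`) is `v`,
read from left to right. -/
def rowWith (w : List A) (row : List ℕ) (v : ℕ) : List A :=
  ((w.zip row).filter (fun p => p.2 == v)).map Prod.fst

/-- The word of the type of a tableau at value `v`: the colors of all boxes with entry `v`,
read left to right, from the bottom row up to the top row. -/
def typeWord (I : Sentence A) (f : Filling) (v : ℕ) : List A :=
  (((I.zip f).reverse).map (fun p => rowWith p.1 p.2 v)).flatten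

/-- `HasType I f B` : the tableau `f` (of shape `I`) has type the weak sentence `B`,
i.e. for every positive integer `v`, the colors of the boxes of `f` containing `v`
(read left to right, bottom to top) form the `v`-th word of `B`. -/
def HasType (I : Sentence A) (f : Filling) (B : Sentence A) : Prop :=
  ∀ v, 1 ≤ v → typeWord I f v = B.getD (v - 1) []

/-- `K_{J,B}`: the number of colored immaculate tableaux of shape `J` and type `B`. -/
noncomputable def KJB (J B : Sentence A) : ℕ :=
  Set.ncard {f : Filling | IsCIT J f ∧ HasType J f B}

/-! ### Standardization -/

/-- The list of boxes of a filling. -/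
def boxes (f : Filling) : List (ℕ × ℕ) :=
  ((List.range f.length).map
    (fun r => (List.range (f.getD r []).length).map (fun j => (r, j)))).flatten

/-- `beforeB f b b'`: box `b` comes strictly before box `b'` in the type-reading order of `f`
(smaller entries first; among equal entries, lower rows first, and within a row left to right). -/
def beforeB (f : Filling) (b b' : ℕ × ℕ) : Bool :=
  entryAt f b < entryAt f b' ||
    (entryAt f b == entryAt f b' && (b'.1 < b.1 || (b.1 == b'.1 && b.2 < b'.2)))

/-- The standardization of a filling: each box is renumbered (starting from `1`)
according to its position in the type-reading order. -/
def stdFill (f : Filling) : Filling :=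
  (List.range f.length).map (fun r =>
    (List.range (f.getD r []).length).map (fun j =>
      1 + ((boxes f).filter (fun b' => beforeB f b' (r, j))).length))

/-- The number of boxes of a filling. -/
def nBoxes (f : Filling) : ℕ := f.flatten.length

/-- A filling of `n` boxes is standard when its entries are exactly `1, …, n`,
each appearing once. -/
def IsStandardF (f : Filling) : Prop := f.flatten.Perm (List.range' 1 (nBoxes f))

/-! ### Descents and the colored descent composition -/

/-- The (0-indexed) row containing the value `v` in a standard filling. -/
def rowOf (f : Filling) (v : ℕ) : ℕ := f.findIdx (fun row => row.contains v)

/-- The sorted list of descents of a standard filling: those `i` with `1 ≤ i ≤ n-1`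
such that `i+1` lies in a strictly lower row than `i`. -/
def descList (f : Filling) : List ℕ :=
  (List.range' 1 (nBoxes f - 1)).filter (fun i => decide (rowOf f i < rowOf f (i + 1)))

/-- The composition of `n` associated to a set of split positions `d_1 < … < d_k`:
`(d_1, d_2 - d_1, …, n - d_k)`. -/
def compOf (ds : List ℕ) (n : ℕ) : List ℕ :=
  List.zipWith (fun a b => b - a) (0 :: ds) (ds ++ [n])

/-- Split a word into a sentence according to a composition. -/
def splitByComp : List A → List ℕ → List (List A)
  | _, [] => []
  | w, a :: rest => w.take a :: splitByComp (w.drop a) rest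

/-- The color of the box containing the value `v` in a standard filling of shape `I`. -/
def colorOf [Inhabited A] (I : Sentence A) (f : Filling) (v : ℕ) : A :=
  (I.getD (rowOf f v) []).getD ((f.getD (rowOf f v) []).findIdx (fun x => x == v)) default

/-- The maximal word of the colored descent composition of a standard filling of shape `I`:
the colors of its boxes read in the order of their integer entries. -/
def readWord [Inhabited A] (I : Sentence A) (f : Filling) : List A :=
  (List.range (nBoxes f)).map (fun i => colorOf I f (i + 1))

/-- The colored descent composition `co_A(U)` of a standard colored immaculate tableau:
read the colors of the boxes in the order of their entries, starting a new word
immediately after each descent. -/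
def coA [Inhabited A] (I : Sentence A) (f : Filling) : Sentence A :=
  if nBoxes f = 0 then [] else splitByComp (readWord I f) (compOf (descList f) (nBoxes f))

/-- `L_{J,C}`: the number of standard colored immaculate tableaux of shape `J`
with colored descent composition `C`. -/
noncomputable def LJC [Inhabited A] (J C : Sentence A) : ℕ :=
  Set.ncard {f : Filling | IsCIT J f ∧ IsStandardF f ∧ coA J f = C}

/-! ### The colored quasisymmetric functions `QSym_A` -/

/-- A (normal form of a) monomial in the partially commutative variables `x_{a,i}`:
a pair consisting of the list of words `(w_1, …, w_m)` and the list of (strictly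
increasing, positive) second indices `(j_1 < … < j_m)`, representing
`x_{w_1,j_1} ⋯ x_{w_m,j_m}`. -/
abbrev Mono (A : Type*) := List (List A) × List ℕ

/-- A colored quasisymmetric "series": a formal linear combination of monomials,
recorded by its coefficient function.  `QSym_A` itself is the span of the colored
monomial functions `MQ I` inside this space. -/
abbrev QSymA (A : Type*) := Mono A → ℚ

/-- Validity of a monomial normal form: words and indices match up, the indices are
strictly increasing positive integers, and all words are nonempty. -/
def ValidMono (m : Mono A) : Prop :=
  m.1.length = m.2.length ∧ m.2.Chain' (· < ·) ∧ (∀ j ∈ m.2, 1 ≤ j) ∧ ∀ w ∈ m.1, w ≠ []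

open Classical in
/-- The colored monomial quasisymmetric function `M_I`: the sum of all monomials
`x_{w_1,j_1} ⋯ x_{w_m,j_m}` with `j_1 < … < j_m`, where `I = (w_1, …, w_m)`. -/
noncomputable def MQ (I : Sentence A) : QSymA A := fun m =>
  if m.1 = I ∧ ValidMono m then 1 else 0

/-- The largest entry of a filling. -/
def maxEntry (f : Filling) : ℕ := f.flatten.foldr max 0

/-- The monomial `x_T` of a colored immaculate tableau `T = f` of shape `I`:
for `T` of type `B = (u_1, …, u_j)` it is `x_{u_1,1} x_{u_2,2} ⋯ x_{u_j,j}`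
(empty words are skipped). -/
def monoOf (I : Sentence A) (f : Filling) : Mono A :=
  let vs := ((List.range (maxEntry f)).map (· + 1)).filter (fun v => !(typeWord I f v).isEmpty)
  (vs.map (typeWord I f), vs)

/-- The colored dual immaculate function `𝔖*_J = Σ_T x_T`, the sum of the monomials of all
colored immaculate tableaux `T` of shape `J` (its coefficient at a monomial `m` is the
number of such tableaux with `x_T = m`). -/
noncomputable def dualImm (J : Sentence A) : QSymA A := fun m =>
  (Set.ncard {f : Filling | IsCIT J f ∧ monoOf J f = m} : ℚ)

/-- The colored fundamental quasisymmetric function `F_I = Σ_{J ⪯ I} M_J`. -/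
noncomputable def FQ (I : Sentence A) : QSymA A :=
  ∑ᶠ J ∈ {J : Sentence A | Refines J I}, MQ J

/-! ### The colored immaculate descent graph -/

/-- Edges of the colored immaculate descent graph: a directed edge from `I` to `J` (`J ≠ I`)
whenever some standard colored immaculate tableau of shape `I` has colored descent
composition `J`. -/
def IsEdge [Inhabited A] (I J : Sentence A) : Prop := J ≠ I ∧ LJC I J ≠ 0

/-- Directed paths from `I` to `K` in the colored immaculate descent graph, recorded by
their (nonempty) lists of successive vertices; the path `[I]` is the empty path at `I`. -/
def PathsFromTo [Inhabited A] (I K : Sentence A) : Set (List (Sentence A)) :=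
  {p | p.head? = some I ∧ p.getLast? = some K ∧ p.Chain' IsEdge}

/-- The signed weight `(-1)^{ℓ(𝒫)} prod(𝒫)` of a directed path `𝒫`:
`ℓ(𝒫)` is its number of edges and `prod(𝒫)` the product of its edge weights `L_{I,J}`. -/
noncomputable def pathWeight [Inhabited A] (p : List (Sentence A)) : ℚ :=
  ((-1 : ℚ)) ^ (p.length - 1) * ((p.zip p.tail).map (fun e => (LJC e.1 e.2 : ℚ))).prod

/-- `L⁻¹_{I,K} = Σ_𝒫 (-1)^{ℓ(𝒫)} prod(𝒫)`, summed over all directed paths `𝒫`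
from `I` to `K` in the colored immaculate descent graph. -/
noncomputable def Linv [Inhabited A] (I K : Sentence A) : ℚ :=
  ∑ᶠ p ∈ PathsFromTo I K, pathWeight p

/-! ### The colored noncommutative symmetric functions `NSym_A` -/

/-- A formal series over the complete homogeneous basis `{H_I}` of `NSym_A`, recorded by its
coefficient function on (weak) sentences.  `NSym_A` itself consists of the finitely
supported elements supported on genuine sentences; see `InNSym`. -/
abbrev NSymA (A : Type*) := Sentence A → ℚ

/-- Membership in `NSym_A` proper: finitely supported, and supported on genuine sentences. -/
def InNSym (f : NSymA A) : Prop :=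
  (Function.support f).Finite ∧ ∀ I, f I ≠ 0 → IsSentence I

open Classical in
/-- The colored complete homogeneous noncommutative symmetric function
`H_I = H_{w_1} ⋯ H_{w_k}`. -/
noncomputable def Hd (I : Sentence A) : NSymA A := fun J => if J = I then 1 else 0

/-- `H_w` for a single word `w`, with `H_∅ = 1`. -/
noncomputable def Hw (w : List A) : NSymA A := if w.isEmpty then Hd [] else Hd [w]

/-- Multiplication in `NSym_A` (the concatenation product, extended to series):
`H_I · H_J = H_{I ⬝ J}`. -/
def mulN (f g : NSymA A) : NSymA A := fun I =>
  ∑ j ∈ Finset.range (I.length + 1), f (I.take j) * g (I.drop j)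

/-- The duality pairing `⟨·,·⟩ : NSym_A × QSym_A → ℚ`, determined by
`⟨H_I, M_J⟩ = δ_{I,J}`: the `M_I`-coefficient of a quasisymmetric function is its
coefficient on the monomial `x_{w_1,1} x_{w_2,2} ⋯ x_{w_k,k}`. -/
noncomputable def pairNQ (G : NSymA A) (F : QSymA A) : ℚ :=
  ∑ᶠ I ∈ {I : Sentence A | IsSentence I}, G I * F (I, List.range' 1 I.length)

/-- All ways of splitting each word of a list of words into a prefix and a suffix. -/
def splitsOf : List (List A) → List (List (List A) × List (List A))
  | [] => [([], [])]
  | w :: ws =>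
      (((splitsOf ws).map (fun p =>
        (List.range (w.length + 1)).map (fun t => (w.take t :: p.1, w.drop t :: p.2))))).flatten

/-- Restriction of a candidate monomial: keep only the nonempty words together with
their indices. -/
def restrictMono (ws : List (List A)) (js : List ℕ) : Mono A :=
  let ps := (ws.zip js).filter (fun p => !p.1.isEmpty)
  (ps.map Prod.fst, ps.map Prod.snd)

/-- The product of colored quasisymmetric series: the coefficient of a monomial in `F·G`
is the sum, over all ways of writing each of its words as a concatenation of a word of a
monomial of `F` (on the left) and a word of a monomial of `G` (on the right), of the
products of the corresponding coefficients. -/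
def mulQ (F G : QSymA A) : QSymA A := fun m =>
  ((splitsOf m.1).map (fun p => F (restrictMono p.1 m.2) * G (restrictMono p.2 m.2))).sum

/-- The right perp operator `M^⊸` of `M ∈ QSym_A`, the linear operator on `NSym_A`
determined by `⟨M^⊸(H), G⟩ = ⟨H, G·M⟩`; explicitly, for the dual bases `{M_I}` and `{H_I}`,
`M^⊸(H) = Σ_I ⟨H, M_I · M⟩ H_I`. -/
noncomputable def rperp (M : QSymA A) (H : NSymA A) : NSymA A :=
  ∑ᶠ I ∈ {I : Sentence A | IsSentence I}, pairNQ H (mulQ (MQ I) M) • Hd I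

/-- The colored noncommutative Bernstein operator
`𝔹_v = Σ_u Σ_{Q : w(Q^r) = u} (-1)^{ℓ(Q)} H_{v·u} · (Σ_{S ⪰ Q} M_S^⊸)`,
where `Q` runs over all sentences, `u = w(Q^r)` is the concatenation of the words of `Q`
in reverse order, and `S` runs over all coarsenings of `Q`. -/
noncomputable def Bern (v : List A) (f : NSymA A) : NSymA A :=
  ∑ᶠ Q ∈ {Q : Sentence A | IsSentence Q},
    ((-1 : ℚ)) ^ Q.length •
      mulN (Hw (v ++ Q.reverse.flatten))
        (∑ᶠ S ∈ {S : Sentence A | Refines Q S}, rperp (MQ S) f)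

/-- The colored immaculate function `𝔖_J = 𝔹_{v_1} 𝔹_{v_2} ⋯ 𝔹_{v_h}(1)`. -/
noncomputable def ImmS (J : Sentence A) : NSymA A := J.foldr Bern (Hd [])

/-- The colored ribbon function `R_I = Σ_{J ⪰ I} (-1)^{ℓ(J) - ℓ(I)} H_J`. -/
noncomputable def Rib (I : Sentence A) : NSymA A :=
  ∑ᶠ J ∈ {J : Sentence A | Refines I J}, ((-1 : ℚ)) ^ (I.length - J.length) • Hd J

/-- The Pieri relation `J ⊂_w K` for a sentence `J = (v_1, …, v_h)` and a word `w`: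
`K = (u_1, …, u_g)` with `h ≤ g ≤ h+1` (setting `v_{h+1} = ∅`) and `u_j = v_j · q_j`
for words `q_j` (possibly empty) whose reversed concatenation `q_g ⋯ q_1` equals `w`. -/
def PieriRel (J : Sentence A) (w : List A) (K : Sentence A) : Prop :=
  J.length ≤ K.length ∧ K.length ≤ J.length + 1 ∧
  ∃ q : List (List A), q.length = K.length ∧ q.reverse.flatten = w ∧
    ∀ j < K.length, K.getD j [] = J.getD j [] ++ q.getD j []

/-- Right containment of a weak sentence `K` in `J`: same length, and each word of `K` is a
suffix of the corresponding word of `J`. -/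
def RightContained (K J : Sentence A) : Prop :=
  K.length = J.length ∧ ∀ i < J.length, (K.getD i []).IsSuffix (J.getD i [])

/-- The weak sentence `J/_R K`: remove each word of `K` from the right end of the
corresponding word of `J`. -/
def rightQuot (J K : Sentence A) : Sentence A :=
  List.zipWith (fun v u => v.take (v.length - u.length)) J K

/-- Left containment `J ⊆_L I`: `ℓ(J) ≤ ℓ(I)` and each word of `J` is a prefix of the
corresponding word of `I`. -/
def LeftContained (J I : Sentence A) : Prop :=
  J.length ≤ I.length ∧ ∀ i < J.length, (J.getD i []).IsPrefix (I.getD i [])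

/-- A skew colored immaculate tableau of shape `I/J`: a filling of the active boxes
(the `i`-th row keeps the last `|w_i| - |v_i|` boxes) with positive integers, rows weakly
increasing left to right, and the entries in the (active part of the) first column of `I`
strictly increasing top to bottom. -/
def IsSkewCIT (I J : Sentence A) (f : Filling) : Prop :=
  f.map List.length =
    (List.range I.length).map (fun i => (I.getD i []).length - (J.getD i []).length) ∧
  (∀ row ∈ f, row.Chain' (· ≤ ·)) ∧
  ((List.range I.length).filterMap
    (fun i => if (J.getD i []).length = 0 then (f.getD i []).head? else none)).Chain' (· < ·) ∧
  (∀ x ∈ f.flatten, 1 ≤ x)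

/-- The word of the type of a skew tableau at value `v`: the colors of the active boxes with
entry `v`, read left to right, bottom to top. -/
def skewTypeWord (I J : Sentence A) (f : Filling) (v : ℕ) : List A :=
  (((List.range I.length).reverse).map (fun i =>
    rowWith ((I.getD i []).drop (J.getD i []).length) (f.getD i []) v)).flatten

/-- `SkewHasType I J f K` : the skew tableau `f` of shape `I/J` has type `K`. -/
def SkewHasType (I J : Sentence A) (f : Filling) (K : Sentence A) : Prop :=
  ∀ v, 1 ≤ v → skewTypeWord I J f v = K.getD (v - 1) []

/-! ### The complement involution `ψ` and the row-strict functions -/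

/-- The complement `I^c` of a sentence: the unique sentence with the same maximal word
that splits exactly where `I` does not. -/
def complSent (I : Sentence A) : Sentence A :=
  let w := I.flatten
  let n := w.length
  if n = 0 then []
  else
    let splits := (((wl I).scanl (· + ·) 0).drop 1).dropLast
    let csplits := (List.range' 1 (n - 1)).filter (fun i => !(splits.contains i))
    splitByComp w (compOf csplits n)

/-- The `M_I`-coefficient of a colored quasisymmetric function. -/
noncomputable def coeffM (G : QSymA A) (I : Sentence A) : ℚ := G (I, List.range' 1 I.length)

/-- The image of `M_I` under `ψ`, via `M_I = Σ_{J ⪯ I} (-1)^{ℓ(J)-ℓ(I)} F_J` and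
`ψ(F_J) = F_{J^c}`. -/
noncomputable def psiM (I : Sentence A) : QSymA A :=
  ∑ᶠ J ∈ {J : Sentence A | Refines J I}, ((-1 : ℚ)) ^ (J.length - I.length) • FQ (complSent J)

/-- The linear involution `ψ` of `QSym_A`, determined by `ψ(F_I) = F_{I^c}`. -/
noncomputable def psiQ (G : QSymA A) : QSymA A :=
  ∑ᶠ I ∈ {I : Sentence A | IsSentence I}, coeffM G I • psiM I

/-- A colored row-strict immaculate tableau of shape `I`: entries strictly increase left to
right along each row and weakly increase top to bottom down the first column. -/
def IsCRSIT (I : Sentence A) (f : Filling) : Prop :=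
  f.map List.length = I.map List.length ∧
  (∀ row ∈ f, row.Chain' (· < ·)) ∧
  (f.filterMap List.head?).Chain' (· ≤ ·) ∧
  (∀ x ∈ f.flatten, 1 ≤ x)

/-- The word of the type of a row-strict tableau at value `v`: the colors of the boxes with
entry `v`, read left to right, top to bottom. -/
def rsTypeWord (I : Sentence A) (f : Filling) (v : ℕ) : List A :=
  ((I.zip f).map (fun p => rowWith p.1 p.2 v)).flatten

/-- The monomial `x_T` of a colored row-strict immaculate tableau. -/
def rsMonoOf (I : Sentence A) (f : Filling) : Mono A :=
  let vs := ((List.range (maxEntry f)).map (· + 1)).filter (fun v => !(rsTypeWord I f v).isEmpty)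
  (vs.map (rsTypeWord I f), vs)

/-- The colored row-strict dual immaculate function `ℛ𝔖*_J = Σ_T x_T`, summed over all
colored row-strict immaculate tableaux `T` of shape `J`. -/
noncomputable def rsDualImm (J : Sentence A) : QSymA A := fun m =>
  (Set.ncard {f : Filling | IsCRSIT J f ∧ rsMonoOf J f = m} : ℚ)

/-- `α ⪰ β` in the reverse lexicographic order on compositions: at the first index where
they differ, `α` has the *smaller* entry (padding with zeros). -/
def RevLexGE (α β : List ℕ) : Prop :=
  α = β ∨ ∃ i, (∀ j < i, α.getD j 0 = β.getD j 0) ∧ α.getD i 0 < β.getD i 0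

/-! ### Uncolored (ordinary) versions, for `QSym` -/

namespace Uncolored

/-- A composition: a list of positive integers. -/
def IsComposition (α : List ℕ) : Prop := ∀ a ∈ α, 1 ≤ a

/-- `β ⪯ α`: the composition `α` is obtained by summing adjacent parts of `β`. -/
def RefinesC (β α : List ℕ) : Prop :=
  ∃ P : List (List ℕ), (∀ p ∈ P, p ≠ []) ∧ P.flatten = β ∧ P.map List.sum = α

/-- A monomial `x_{i_1}^{a_1} ⋯ x_{i_m}^{a_m}` recorded by its exponents and its
strictly increasing positive indices. -/
abbrev MonoU := List ℕ × List ℕ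

/-- A quasisymmetric "series", recorded by its coefficient function on monomials.
`QSym` is the span of the monomial functions `MU α` inside this space. -/
abbrev QSymU := MonoU → ℚ

/-- Validity of a monomial: matching lengths, strictly increasing positive indices,
positive exponents. -/
def ValidMonoU (m : MonoU) : Prop :=
  m.1.length = m.2.length ∧ m.2.Chain' (· < ·) ∧ (∀ j ∈ m.2, 1 ≤ j) ∧ ∀ a ∈ m.1, 1 ≤ a

open Classical in
/-- The monomial quasisymmetric function `M_α`. -/
noncomputable def MU (α : List ℕ) : QSymU := fun m =>
  if m.1 = α ∧ ValidMonoU m then 1 else 0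

/-- The fundamental quasisymmetric function `F_α = Σ_{β ⪯ α} M_β`. -/
noncomputable def FU (α : List ℕ) : QSymU :=
  ∑ᶠ β ∈ {β : List ℕ | RefinesC β α}, MU β

/-- An immaculate tableau of shape `α`: positive integer entries, rows weakly increasing
left to right, first column strictly increasing top to bottom. -/
def IsIT (α : List ℕ) (f : Filling) : Prop :=
  f.map List.length = α ∧
  (∀ row ∈ f, row.Chain' (· ≤ ·)) ∧
  (f.filterMap List.head?).Chain' (· < ·) ∧
  (∀ x ∈ f.flatten, 1 ≤ x)

/-- The number of boxes of `f` with entry `v`. -/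
def countOf (f : Filling) (v : ℕ) : ℕ := (f.flatten.filter (fun x => x == v)).length

/-- The monomial `x^T` of an immaculate tableau `T` of type `β`:
`x_1^{β_1} ⋯ x_h^{β_h}` (zero exponents skipped). -/
def monoOfU (f : Filling) : MonoU :=
  let vs := ((List.range (maxEntry f)).map (· + 1)).filter (fun v => decide (countOf f v ≠ 0))
  (vs.map (countOf f), vs)

/-- The dual immaculate function `𝔖*_α = Σ_T x^T`, summed over all immaculate tableaux
of shape `α`. -/
noncomputable def dualImmU (α : List ℕ) : QSymU := fun m =>
  (Set.ncard {f : Filling | IsIT α f ∧ monoOfU f = m} : ℚ)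

/-- The descent composition `co(U)` of a standard immaculate tableau. -/
def descComp (f : Filling) : List ℕ :=
  if nBoxes f = 0 then [] else compOf (descList f) (nBoxes f)

/-- `L_{α,β}`: the number of standard immaculate tableaux of shape `α` with descent
composition `β`. -/
noncomputable def LU (α β : List ℕ) : ℕ :=
  Set.ncard {f : Filling | IsIT α f ∧ IsStandardF f ∧ descComp f = β}

/-- Edges of the immaculate descent graph `𝔇^n`. -/
def IsEdgeU (α β : List ℕ) : Prop := β ≠ α ∧ LU α β ≠ 0

/-- Directed paths from `α` to `β` in the immaculate descent graph, recorded by their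
lists of successive vertices; `[α]` is the empty path at `α`. -/
def PathsU (α β : List ℕ) : Set (List (List ℕ)) :=
  {p | p.head? = some α ∧ p.getLast? = some β ∧ p.Chain' IsEdgeU}

/-- The signed weight `(-1)^{ℓ(𝒫)} prod(𝒫)` of a path. -/
noncomputable def pathWeightU (p : List (List ℕ)) : ℚ :=
  ((-1 : ℚ)) ^ (p.length - 1) * ((p.zip p.tail).map (fun e => (LU e.1 e.2 : ℚ))).prod

/-- `L⁻¹_{α,β} = Σ_𝒫 (-1)^{ℓ(𝒫)} prod(𝒫)`, over directed paths from `α` to `β` in `𝔇^n`. -/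
noncomputable def LinvU (α β : List ℕ) : ℚ :=
  ∑ᶠ p ∈ PathsU α β, pathWeightU p

end Uncolored

end ColoredImm

namespace ColoredImm

/-!
Both sides arise from the same way of growing a sentence one letter at a time.

Writing `H_C = ∏ H_w`, the product rule `R_C H_w = R_{C,w} + R_{Cw}` (start a new word with `w`, or
append it to the last one) determines the ribbon functions. On the other side, commuting `H_w`
past a Bernstein operator by means of the coproduct, where the signed sums over segmentations
cancel, gives a right Pieri rule: `𝔖_J H_w` is the sum of the `𝔖_K` over all ways of placing the
letters of `w` one after the other at the ends of rows of `J` (or in a new last row), each letter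
weakly above the preceding one.

Hence `R_C` is the sum of `𝔖_J` over all histories that grow `J` out of the empty shape by adding
the letters of `C` one by one, where a letter is placed strictly below its predecessor exactly if it
starts a new word of `C`. Recording the times at which boxes are added turns such a history into a
standard immaculate tableau of shape `J`, whose descents are the times at which the next letter goes
strictly lower; so the histories ending in `J` are counted by `L_{J,C}`.
-/

section Sentences
variable {A : Type*}

theorem isSentence_nil : IsSentence ([] : Sentence A) := by simp [IsSentence]

theorem isSentence_singleton {w : List A} : IsSentence [w] ↔ w ≠ [] := by simp [IsSentence]

theorem isSentence_cons {w : List A} {I : Sentence A} :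
    IsSentence (w :: I) ↔ w ≠ [] ∧ IsSentence I := by
  simp [IsSentence]

theorem isSentence_append {I J : Sentence A} :
    IsSentence (I ++ J) ↔ IsSentence I ∧ IsSentence J := by
  simp [IsSentence, or_imp, forall_and]

theorem IsSentence.eq_nil_of_flatten_eq_nil {I : Sentence A} (hI : IsSentence I)
    (h : I.flatten = []) : I = [] :=
  List.eq_nil_iff_forall_not_mem.2 fun w hw => hI w hw (List.flatten_eq_nil_iff.1 h w hw)

theorem IsSentence.append_inj_of_flatten_eq {I I' J J' : Sentence A} (hI : IsSentence I)
    (hI' : IsSentence I') (hflat : I.flatten = I'.flatten) (h : I ++ J = I' ++ J') :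
    I = I' ∧ J = J' := by
  rcases List.append_eq_append_iff.1 h with ⟨T, rfl, rfl⟩ | ⟨T, rfl, rfl⟩
  · obtain rfl : T = [] :=
      (isSentence_append.1 hI').2.eq_nil_of_flatten_eq_nil (by simpa using hflat)
    simp
  · obtain rfl : T = [] :=
      (isSentence_append.1 hI).2.eq_nil_of_flatten_eq_nil (by simpa using hflat)
    simp

theorem flattenWS_append (I J : Sentence A) : flattenWS (I ++ J) = flattenWS I ++ flattenWS J :=
  List.filter_append ..

theorem isSentence_flattenWS (I : Sentence A) : IsSentence (flattenWS I) := fun w hw => by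
  simpa using (List.mem_filter.1 hw).2

theorem IsSentence.flattenWS_eq {I : Sentence A} (hI : IsSentence I) : flattenWS I = I :=
  List.filter_eq_self.2 fun w hw => by simpa using hI w hw

theorem finite_setOf_flatten_eq (s : List A) :
    {Q : Sentence A | IsSentence Q ∧ Q.flatten = s}.Finite := by
  induction s with
  | nil =>
    exact (Set.finite_singleton []).subset fun Q hQ => hQ.1.eq_nil_of_flatten_eq_nil hQ.2
  | cons a s ih =>
    refine ((ih.image ([a] :: ·)).union (ih.image fun Q => (a :: Q.headD []) :: Q.tail)).subset ?_
    rintro (_ | ⟨_ | ⟨b, _ | ⟨c, q⟩⟩, Q⟩) ⟨hQ, hflat⟩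
    · simp at hflat
    · exact absurd rfl (isSentence_cons.1 hQ).1
    · obtain ⟨rfl, htail⟩ : b = a ∧ Q.flatten = s := by simpa using hflat
      exact Or.inl ⟨Q, ⟨(isSentence_cons.1 hQ).2, htail⟩, rfl⟩
    · obtain ⟨rfl, htail⟩ : b = a ∧ c :: (q ++ Q.flatten) = s := by simpa using hflat
      exact Or.inr ⟨(c :: q) :: Q,
        ⟨isSentence_cons.2 ⟨by simp, (isSentence_cons.1 hQ).2⟩, htail⟩, rfl⟩

/-- The finite set of all sentences whose words concatenate to `s`. -/
noncomputable def segmentations (s : List A) : Finset (Sentence A) :=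
  (finite_setOf_flatten_eq s).toFinset

theorem mem_segmentations {s : List A} {Q : Sentence A} :
    Q ∈ segmentations s ↔ IsSentence Q ∧ Q.flatten = s := by
  simp [segmentations]

theorem segmentations_nil : segmentations ([] : List A) = {[]} := by
  ext Q
  rw [mem_segmentations, Finset.mem_singleton]
  exact ⟨fun h => h.1.eq_nil_of_flatten_eq_nil h.2, fun h => h ▸ ⟨isSentence_nil, rfl⟩⟩

theorem sum_segmentations_eq_sum_last {M : Type*} [AddCommMonoid M] (φ : Sentence A → M)
    {s : List A} (hs : s ≠ []) :
    ∑ Q ∈ segmentations s, φ Q =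
      ∑ t ∈ Finset.range s.length, ∑ Q ∈ segmentations (s.take t), φ (Q ++ [s.drop t]) := by
  rw [Finset.sum_sigma']
  symm
  refine Finset.sum_bij (fun p _ => p.2 ++ [s.drop p.1]) ?_ ?_ ?_ fun _ _ => rfl
  · rintro ⟨t, Q⟩ h
    simp only [Finset.mem_sigma, Finset.mem_range, mem_segmentations] at h ⊢
    exact ⟨isSentence_append.2 ⟨h.2.1, isSentence_singleton.2 (by simpa using h.1)⟩,
      by simp [h.2.2]⟩
  · rintro ⟨t, Q⟩ h ⟨t', Q'⟩ h' heq
    simp only [Finset.mem_sigma, Finset.mem_range] at h h'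
    obtain ⟨rfl, hdrop⟩ := List.append_inj' heq rfl
    have hlen : s.length - t = s.length - t' := by simpa using congrArg (·.flatten.length) hdrop
    obtain rfl : t = t' := by omega
    rfl
  · intro Q hQ
    obtain ⟨hQ, hflat⟩ := mem_segmentations.1 hQ
    obtain rfl | ⟨Q, x, rfl⟩ := Q.eq_nil_or_concat'
    · exact absurd hflat.symm hs
    obtain ⟨hQ', hx⟩ := isSentence_append.1 hQ
    obtain rfl : Q.flatten ++ x = s := by simpa using hflat
    refine ⟨⟨Q.flatten.length, Q⟩, ?_, by simp⟩
    simp only [Finset.mem_sigma, Finset.mem_range, mem_segmentations, List.length_append,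
      Nat.lt_add_right_iff_pos, List.length_pos_iff]
    exact ⟨isSentence_singleton.1 hx, hQ', by simp⟩

/-- The words `q₁ ⋯ qₖ ↦ qₖ ⋯ q₁` occurring in the Bernstein operators are, up to sign, the
convolution inverse of the identity: the part of `s` after position `t` either forms a new last
word or is moved to the front, and these contributions cancel. -/
theorem sum_range_segmentations_eq_zero {M : Type*} [AddCommGroup M] [Module ℚ M]
    (φ : List A → M) {s : List A} (hs : s ≠ []) :
    ∑ t ∈ Finset.range (s.length + 1), ∑ Q ∈ segmentations (s.take t),
      (-1 : ℚ) ^ Q.length • φ (s.drop t ++ Q.reverse.flatten) = 0 := by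
  rw [Finset.sum_range_succ, List.take_length, sum_segmentations_eq_sum_last _ hs,
    ← Finset.sum_add_distrib]
  refine Finset.sum_eq_zero fun t _ => ?_
  rw [← Finset.sum_add_distrib]
  exact Finset.sum_eq_zero fun Q _ => by simp [pow_succ]

theorem refines_nil_right {C : Sentence A} : Refines C [] ↔ C = [] := by
  constructor
  · rintro ⟨P, -, rfl, h⟩
    simp [List.map_eq_nil_iff.1 h]
  · rintro rfl
    exact ⟨[], by simp⟩

theorem refines_append_singleton {C J : Sentence A} {x : List A} :
    Refines C (J ++ [x]) ↔ ∃ C₁ C₂, C = C₁ ++ C₂ ∧ C₂ ≠ [] ∧ C₂.flatten = x ∧ Refines C₁ J := by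
  constructor
  · rintro ⟨P, hne, rfl, hmap⟩
    obtain ⟨P₁, P₂, rfl, rfl, h₂⟩ := List.map_eq_append_iff.1 hmap
    obtain ⟨p, rfl, rfl⟩ := List.map_eq_singleton_iff.1 h₂
    exact ⟨P₁.flatten, p, by simp, hne p (by simp), rfl, P₁,
      fun q hq => hne q (by simp [hq]), rfl, rfl⟩
  · rintro ⟨C₁, C₂, rfl, hC₂, rfl, P, hne, rfl, rfl⟩
    exact ⟨P ++ [C₂], by simpa [or_imp, forall_and, hC₂] using hne, by simp, by simp⟩

theorem Refines.flatten_eq {C J : Sentence A} (h : Refines C J) : J.flatten = C.flatten := by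
  obtain ⟨P, -, rfl, rfl⟩ := h
  rw [List.flatten_flatten]

theorem Refines.length_le {C J : Sentence A} (h : Refines C J) : J.length ≤ C.length := by
  obtain ⟨P, hne, rfl, rfl⟩ := h
  rw [List.length_map, List.length_flatten, ← List.length_map (f := List.length)]
  refine List.length_le_sum_of_one_le _ fun n hn => ?_
  obtain ⟨p, hp, rfl⟩ := List.mem_map.1 hn
  exact List.length_pos_iff.2 (hne p hp)

theorem Refines.isSentence {C J : Sentence A} (h : Refines C J) (hC : IsSentence C) :
    IsSentence J := by
  obtain ⟨P, hne, rfl, rfl⟩ := h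
  intro w hw hnil
  obtain ⟨p, hp, rfl⟩ := List.mem_map.1 hw
  have hsent : IsSentence p := fun u hu => hC u (List.mem_flatten.2 ⟨p, hp, hu⟩)
  exact hne p hp (hsent.eq_nil_of_flatten_eq_nil hnil)

theorem IsSentence.finite_coarsenings {C : Sentence A} (hC : IsSentence C) :
    {J : Sentence A | Refines C J}.Finite :=
  (finite_setOf_flatten_eq C.flatten).subset fun _ hJ => ⟨hJ.isSentence hC, hJ.flatten_eq⟩

open Classical in
/-- The finite set of all sentences refining `S`. -/
noncomputable def refinements (S : Sentence A) : Finset (Sentence A) :=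
  {Q ∈ segmentations S.flatten | Refines Q S}

theorem mem_refinements {S Q : Sentence A} : Q ∈ refinements S ↔ IsSentence Q ∧ Refines Q S := by
  simp only [refinements, Finset.mem_filter, mem_segmentations]
  exact ⟨fun h => ⟨h.1.1, h.2⟩, fun h => ⟨⟨h.1, h.2.flatten_eq.symm⟩, h.2⟩⟩

theorem refinements_nil : refinements ([] : Sentence A) = {[]} := by
  ext Q
  rw [mem_refinements, refines_nil_right, Finset.mem_singleton]
  exact ⟨And.right, fun h => ⟨h ▸ isSentence_nil, h⟩⟩

theorem sum_refinements_append_singleton {M : Type*} [AddCommMonoid M] (φ : Sentence A → M)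
    (S : Sentence A) {s : List A} (hs : s ≠ []) :
    ∑ Q ∈ refinements (S ++ [s]), φ Q =
      ∑ Q₁ ∈ refinements S, ∑ Q₂ ∈ segmentations s, φ (Q₁ ++ Q₂) := by
  rw [← Finset.sum_product']
  symm
  refine Finset.sum_bij (fun p _ => p.1 ++ p.2) ?_ ?_ ?_ fun _ _ => rfl
  · rintro ⟨Q₁, Q₂⟩ h
    simp only [Finset.mem_product, mem_refinements, mem_segmentations] at h ⊢
    obtain ⟨⟨h₁, href⟩, h₂, rfl⟩ := h
    exact ⟨isSentence_append.2 ⟨h₁, h₂⟩,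
      refines_append_singleton.2 ⟨Q₁, Q₂, rfl, by rintro rfl; exact hs rfl, rfl, href⟩⟩
  · rintro ⟨Q₁, Q₂⟩ h ⟨Q₁', Q₂'⟩ h' heq
    simp only [Finset.mem_product, mem_refinements] at h h'
    obtain ⟨rfl, rfl⟩ := h.1.1.append_inj_of_flatten_eq h'.1.1
      (h.1.2.flatten_eq.symm.trans h'.1.2.flatten_eq) heq
    rfl
  · intro Q hQ
    obtain ⟨hQ, href⟩ := mem_refinements.1 hQ
    obtain ⟨Q₁, Q₂, rfl, -, hflat, href⟩ := refines_append_singleton.1 href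
    obtain ⟨h₁, h₂⟩ := isSentence_append.1 hQ
    exact ⟨(Q₁, Q₂), by simp [mem_refinements, mem_segmentations, *], rfl⟩

theorem sum_refinements_flattenWS_append_singleton {M : Type*} [AddCommMonoid M]
    (φ : Sentence A → M) (S : Sentence A) (s : List A) :
    ∑ Q ∈ refinements (flattenWS (S ++ [s])), φ Q =
      ∑ Q₁ ∈ refinements (flattenWS S), ∑ Q₂ ∈ segmentations s, φ (Q₁ ++ Q₂) := by
  rw [flattenWS_append]
  obtain rfl | hs := eq_or_ne s []
  · simp [segmentations_nil, flattenWS]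
  · rw [(isSentence_singleton.2 hs).flattenWS_eq, sum_refinements_append_singleton φ _ hs]

end Sentences

section NSym
variable {A : Type*}

variable (A) in
/-- `NSym_A` as a subspace of the space of formal series `NSymA A`. -/
def nsym : Submodule ℚ (NSymA A) where
  carrier := {f | InNSym f}
  zero_mem' := ⟨by simp, by simp⟩
  add_mem' {f g} hf hg :=
    ⟨(hf.1.union hg.1).subset (Function.support_add f g), fun I hI =>
      (Function.support_add f g hI).elim (hf.2 I) (hg.2 I)⟩
  smul_mem' c f hf :=
    ⟨hf.1.subset (Function.support_const_smul_subset c f), fun I hI =>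
      hf.2 I (Function.support_const_smul_subset c f hI)⟩

theorem Hd_mem_nsym {I : Sentence A} (hI : IsSentence I) : Hd I ∈ nsym A := by
  have hsupp : ∀ J, Hd I J ≠ 0 → J = I := fun J hJ => by simpa [Hd] using hJ
  exact ⟨(Set.finite_singleton I).subset hsupp, fun J hJ => hsupp J hJ ▸ hI⟩

theorem sum_support_smul_Hd {f : NSymA A} (hf : f ∈ nsym A) :
    ∑ J ∈ hf.1.toFinset, f J • Hd J = f := by
  classical
  funext K
  simp [Hd, Finset.sum_apply, eq_comm]

theorem finsum_isSentence_smul_Hd {f : NSymA A} (hf : f ∈ nsym A) :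
    ∑ᶠ I ∈ {I : Sentence A | IsSentence I}, f I • Hd I = f := by
  rw [finsum_mem_eq_sum_of_subset (t := hf.1.toFinset), sum_support_smul_Hd hf]
  · exact fun I hI => by simpa using left_ne_zero_of_smul hI.2
  · exact fun I hI => hf.2 I (by simpa using hI)

/-- The coefficients of an element of `NSym_A` in the basis `H`. -/
noncomputable def coeffH : nsym A →ₗ[ℚ] Sentence A →₀ ℚ where
  toFun f := Finsupp.ofSupportFinite f.1 f.2.1
  map_add' _ _ := by ext; rfl
  map_smul' _ _ := by ext; rfl

theorem linearCombination_coeffH {M : Type*} [AddCommGroup M] [Module ℚ M] (φ : Sentence A → M)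
    {f : NSymA A} (hf : f ∈ nsym A) :
    Finsupp.linearCombination ℚ φ (coeffH ⟨f, hf⟩) = ∑ J ∈ hf.1.toFinset, f J • φ J :=
  Finsupp.sum_of_support_subset _
    (fun J hJ => by simpa [coeffH, Finsupp.ofSupportFinite] using hJ) _ (by simp)

/-- The product of `NSym_A` as a bilinear map. -/
def mulBilin : NSymA A →ₗ[ℚ] NSymA A →ₗ[ℚ] NSymA A :=
  LinearMap.mk₂ ℚ mulN
    (fun f g h => by funext I; simp [mulN, add_mul, Finset.sum_add_distrib])
    (fun c f h => by funext I; simp [mulN, Finset.mul_sum, mul_assoc])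
    (fun f g h => by funext I; simp [mulN, mul_add, Finset.sum_add_distrib])
    (fun c f h => by funext I; simp [mulN, Finset.mul_sum, mul_left_comm])

theorem mulBilin_apply (f g : NSymA A) : mulBilin f g = mulN f g := rfl

theorem mulBilin_Hd_Hd (I J : Sentence A) : mulBilin (Hd I) (Hd J) = Hd (I ++ J) := by
  classical
  funext K
  simp only [mulBilin_apply, mulN, Hd, ← ite_and, mul_ite, mul_one, mul_zero]
  rw [Finset.sum_eq_single I.length]
  · refine if_congr ⟨fun h => ?_, ?_⟩ rfl rfl
    · rw [← List.take_append_drop I.length K, h.2, h.1]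
    · rintro rfl
      simp
  · rintro j hj hne
    refine if_neg fun h => hne ?_
    rw [← h.2, List.length_take, min_eq_left (by simpa [Nat.lt_succ_iff] using hj)]
  · refine fun hI => if_neg fun h => hI ?_
    rw [Finset.mem_range, ← h.2, List.length_take]
    omega

theorem Hw_eq_Hd_flattenWS (w : List A) : Hw w = Hd (flattenWS [w]) := by
  cases w <;> rfl

theorem mulBilin_Hd_nil {f : NSymA A} (hf : f ∈ nsym A) : mulBilin f (Hd []) = f := by
  conv_lhs => rw [← sum_support_smul_Hd hf]
  simp only [map_sum, map_smul, LinearMap.sum_apply, LinearMap.smul_apply, mulBilin_Hd_Hd,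
    List.append_nil]
  exact sum_support_smul_Hd hf

end NSym

section Splits
variable {A : Type*}

theorem length_of_mem_splitsOf {J : Sentence A} {p : Sentence A × Sentence A}
    (hp : p ∈ splitsOf J) : p.1.length = J.length ∧ p.2.length = J.length := by
  induction J generalizing p with
  | nil => simp [List.mem_singleton.1 hp]
  | cons w J ih =>
    obtain ⟨q, hq, t, -, rfl⟩ : ∃ q ∈ splitsOf J, ∃ t < w.length + 1,
        (w.take t :: q.1, w.drop t :: q.2) = p := by simpa [splitsOf] using hp
    simpa using ih hq

theorem nodup_splitsOf (J : Sentence A) : (splitsOf J).Nodup := by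
  induction J with
  | nil => exact List.nodup_singleton _
  | cons w J ih =>
    rw [splitsOf, ← List.flatMap_def, List.nodup_flatMap]
    refine ⟨fun p _ => List.nodup_range.map_on fun t ht t' ht' h => ?_,
      ih.imp fun {p q} hpq => List.disjoint_left.2 fun x hx hx' => hpq ?_⟩
    · have hlen := congrArg (fun p : Sentence A × Sentence A => (p.1.headD []).length) h
      simp only [List.headD_cons, List.length_take] at hlen
      simp only [List.mem_range] at ht ht'
      omega
    · simp only [List.mem_map] at hx hx'
      obtain ⟨t, -, rfl⟩ := hx
      obtain ⟨t', -, h⟩ := hx'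
      simp only [Prod.mk.injEq, List.cons.injEq] at h
      exact Prod.ext h.1.2.symm h.2.2.symm

open Classical in
/-- The finite set of all ways of splitting each word of `J` into a prefix and a suffix. -/
noncomputable def splits (J : Sentence A) : Finset (Sentence A × Sentence A) :=
  (splitsOf J).toFinset

theorem sum_splits {M : Type*} [AddCommMonoid M] (J : Sentence A)
    (φ : Sentence A × Sentence A → M) :
    ∑ p ∈ splits J, φ p = ((splitsOf J).map φ).sum := by
  classical
  rw [splits, List.sum_toFinset φ (by convert nodup_splitsOf J)]

theorem sum_splits_cons {M : Type*} [AddCommMonoid M] (w : List A) (J : Sentence A)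
    (φ : Sentence A × Sentence A → M) :
    ∑ p ∈ splits (w :: J), φ p =
      ∑ p ∈ splits J, ∑ t ∈ Finset.range (w.length + 1), φ (w.take t :: p.1, w.drop t :: p.2) := by
  simp only [sum_splits, splitsOf, List.map_flatten, List.sum_flatten, List.map_map,
    Function.comp_def]
  rfl

theorem sum_splits_append_singleton {M : Type*} [AddCommMonoid M] (J : Sentence A) (w : List A)
    (φ : Sentence A × Sentence A → M) :
    ∑ p ∈ splits (J ++ [w]), φ p =
      ∑ p ∈ splits J, ∑ t ∈ Finset.range (w.length + 1),
        φ (p.1 ++ [w.take t], p.2 ++ [w.drop t]) := by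
  induction J generalizing φ with
  | nil => simp [sum_splits_cons, sum_splits [], splitsOf]
  | cons x J ih =>
    rw [List.cons_append, sum_splits_cons, ih, sum_splits_cons]
    exact Finset.sum_congr rfl fun p _ => Finset.sum_comm

end Splits

section Perp
variable {A : Type*}

theorem restrictMono_fst {ws : List (List A)} {js : List ℕ} (h : ws.length = js.length) :
    (restrictMono ws js).1 = flattenWS ws := by
  conv_rhs => rw [← List.map_fst_zip h.le]
  simp only [restrictMono, flattenWS, List.filter_map]
  rfl

theorem validMono_restrictMono {ws : List (List A)} {n : ℕ} (h : ws.length = n) :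
    ValidMono (restrictMono ws (List.range' 1 n)) := by
  have hsub : (restrictMono ws (List.range' 1 n)).2.Sublist (List.range' 1 n) := by
    conv_rhs => rw [← List.map_snd_zip (l₁ := ws) (l₂ := List.range' 1 n) (by simp [h])]
    exact List.filter_sublist.map _
  refine ⟨by simp [restrictMono], ((List.pairwise_lt_range' (step := 1)).sublist hsub).isChain,
    fun j hj => (List.mem_range'_1.1 (hsub.subset hj)).1, ?_⟩
  rw [restrictMono_fst (by simp [h])]
  exact isSentence_flattenWS ws

open Classical in
/-- The action of `M_S^⊸` on `H_J`: remove from the words of `J` suffixes that spell `S`. -/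
noncomputable def perpH (S J : Sentence A) : NSymA A :=
  ∑ p ∈ splits J with flattenWS p.2 = S, Hd (flattenWS p.1)

theorem perpH_mem_nsym (S J : Sentence A) : perpH S J ∈ nsym A :=
  sum_mem fun _ _ => Hd_mem_nsym (isSentence_flattenWS _)

theorem mulQ_MQ_MQ (I S J : Sentence A) :
    mulQ (MQ I) (MQ S) (J, List.range' 1 J.length) = perpH S J I := by
  classical
  rw [mulQ, perpH, Finset.sum_apply, Finset.sum_filter, sum_splits]
  refine congrArg List.sum (List.map_congr_left fun p hp => ?_)
  obtain ⟨h₁, h₂⟩ := length_of_mem_splitsOf hp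
  simp only [MQ, validMono_restrictMono h₁, validMono_restrictMono h₂, and_true, Hd,
    restrictMono_fst (h₁.trans List.length_range'.symm),
    restrictMono_fst (h₂.trans List.length_range'.symm)]
  simp [eq_comm]

theorem pairNQ_eq_sum {f : NSymA A} (hf : f ∈ nsym A) (F : QSymA A) :
    pairNQ f F = ∑ J ∈ hf.1.toFinset, f J * F (J, List.range' 1 J.length) :=
  finsum_mem_eq_sum_of_subset _ (fun I hI => by simpa using left_ne_zero_of_mul hI.2)
    fun I hI => hf.2 I (by simpa using hI)

theorem rperp_MQ {f : NSymA A} (hf : f ∈ nsym A) (S : Sentence A) :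
    rperp (MQ S) f = ∑ J ∈ hf.1.toFinset, f J • perpH S J := by
  have hpair : ∀ I, pairNQ f (mulQ (MQ I) (MQ S)) = (∑ J ∈ hf.1.toFinset, f J • perpH S J) I := by
    intro I
    simp [pairNQ_eq_sum hf, mulQ_MQ_MQ]
  simp only [rperp, hpair]
  exact finsum_isSentence_smul_Hd
    (sum_mem fun J _ => (nsym A).smul_mem _ (perpH_mem_nsym S J))

open Classical in
theorem sum_coarsenings_perpH {Q : Sentence A} (hQ : IsSentence Q) (J : Sentence A) :
    ∑ S ∈ hQ.finite_coarsenings.toFinset, perpH S J =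
      ∑ p ∈ splits J with Refines Q (flattenWS p.2), Hd (flattenWS p.1) := by
  simp only [perpH, Finset.sum_filter]
  rw [Finset.sum_comm]
  exact Finset.sum_congr rfl fun p _ => by simp [Finset.sum_ite_eq]

end Perp

section Bernstein
variable {A : Type*}

/-- The Bernstein operator `𝔹_v` evaluated at `H_J`. -/
noncomputable def bernH (v : List A) (J : Sentence A) : NSymA A :=
  ∑ p ∈ splits J, ∑ Q ∈ refinements (flattenWS p.2),
    (-1 : ℚ) ^ Q.length • Hd (flattenWS ((v ++ Q.reverse.flatten) :: p.1))

theorem bernH_mem_nsym (v : List A) (J : Sentence A) : bernH v J ∈ nsym A :=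
  sum_mem fun _ _ => sum_mem fun _ _ =>
    (nsym A).smul_mem _ (Hd_mem_nsym (isSentence_flattenWS _))

open Classical in
theorem sum_coarsenings_rperp {f : NSymA A} (hf : f ∈ nsym A) {Q : Sentence A}
    (hQ : IsSentence Q) :
    ∑ᶠ S ∈ {S : Sentence A | Refines Q S}, rperp (MQ S) f =
      ∑ J ∈ hf.1.toFinset, f J •
        ∑ p ∈ splits J with Refines Q (flattenWS p.2), Hd (flattenWS p.1) := by
  rw [finsum_mem_eq_finite_toFinset_sum _ hQ.finite_coarsenings]
  simp only [rperp_MQ hf]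
  rw [Finset.sum_comm]
  simp only [← Finset.smul_sum, sum_coarsenings_perpH hQ]

open Classical in
theorem smul_mulN_sum_coarsenings_rperp {f : NSymA A} (hf : f ∈ nsym A) (v : List A)
    {Q : Sentence A} (hQ : IsSentence Q) :
    (-1 : ℚ) ^ Q.length • mulN (Hw (v ++ Q.reverse.flatten))
        (∑ᶠ S ∈ {S : Sentence A | Refines Q S}, rperp (MQ S) f) =
      ∑ J ∈ hf.1.toFinset, ∑ p ∈ splits J, if Refines Q (flattenWS p.2) then
        f J • (-1 : ℚ) ^ Q.length • Hd (flattenWS ((v ++ Q.reverse.flatten) :: p.1)) else 0 := by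
  rw [sum_coarsenings_rperp hf hQ, ← mulBilin_apply, Hw_eq_Hd_flattenWS]
  simp only [map_sum, map_smul, mulBilin_Hd_Hd, ← flattenWS_append, List.singleton_append,
    Finset.smul_sum, smul_comm ((-1 : ℚ) ^ Q.length)]
  simp only [Finset.sum_filter]

theorem Bern_eq_linearCombination {f : NSymA A} (hf : f ∈ nsym A) (v : List A) :
    Bern v f = Finsupp.linearCombination ℚ (bernH v) (coeffH ⟨f, hf⟩) := by
  classical
  let c (Q : Sentence A) (x : (_ : Sentence A) × (Sentence A × Sentence A)) : NSymA A :=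
    if Q ∈ refinements (flattenWS x.2.2) then
      f x.1 • (-1 : ℚ) ^ Q.length • Hd (flattenWS ((v ++ Q.reverse.flatten) :: x.2.1)) else 0
  have hsum : Bern v f = ∑ᶠ Q, ∑ x ∈ hf.1.toFinset.sigma splits, c Q x := by
    refine finsum_congr fun Q => ?_
    by_cases hQ : IsSentence Q
    · rw [finsum_eq_if, if_pos (by exact hQ), smul_mulN_sum_coarsenings_rperp hf v hQ,
        Finset.sum_sigma]
      simp only [c, mem_refinements, hQ, true_and]
    · simp [c, mem_refinements, hQ]
  have hsupp : ∀ x, (Function.support fun Q => c Q x) ⊆ refinements (flattenWS x.2.2) :=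
    fun x Q hQ => by_contra fun h => hQ (if_neg h)
  rw [hsum, finsum_sum_comm _ _ fun x _ => (Finset.finite_toSet _).subset (hsupp x),
    linearCombination_coeffH, Finset.sum_sigma]
  simp only [bernH, Finset.smul_sum]
  refine Finset.sum_congr rfl fun J _ => Finset.sum_congr rfl fun p _ => ?_
  rw [finsum_eq_finsetSum_of_support_subset _ (hsupp ⟨J, p⟩)]
  exact Finset.sum_congr rfl fun Q hQ => if_pos hQ

theorem Bern_mem_nsym {f : NSymA A} (hf : f ∈ nsym A) (v : List A) : Bern v f ∈ nsym A := by
  rw [Bern_eq_linearCombination hf, linearCombination_coeffH]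
  exact sum_mem fun J _ => (nsym A).smul_mem _ (bernH_mem_nsym v J)

theorem Bern_add {f g : NSymA A} (hf : f ∈ nsym A) (hg : g ∈ nsym A) (v : List A) :
    Bern v (f + g) = Bern v f + Bern v g := by
  rw [Bern_eq_linearCombination hf, Bern_eq_linearCombination hg,
    Bern_eq_linearCombination (add_mem hf hg), ← map_add, ← map_add]
  rfl

theorem Bern_smul {f : NSymA A} (hf : f ∈ nsym A) (v : List A) (c : ℚ) :
    Bern v (c • f) = c • Bern v f := by
  rw [Bern_eq_linearCombination hf, Bern_eq_linearCombination ((nsym A).smul_mem c hf),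
    ← map_smul, ← map_smul]
  rfl

theorem Bern_sum {ι : Type*} (s : Finset ι) (v : List A) {f : ι → NSymA A}
    (hf : ∀ i ∈ s, f i ∈ nsym A) : Bern v (∑ i ∈ s, f i) = ∑ i ∈ s, Bern v (f i) := by
  classical
  induction s using Finset.induction_on with
  | empty => simpa using Bern_smul (zero_mem (nsym A)) v 0
  | insert i s hi ih =>
    have hs : ∀ j ∈ s, f j ∈ nsym A := fun j hj => hf j (Finset.mem_insert_of_mem hj)
    rw [Finset.sum_insert hi, Finset.sum_insert hi,
      Bern_add (hf i (Finset.mem_insert_self i s)) (sum_mem hs), ih hs]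

theorem Bern_Hd {J : Sentence A} (hJ : IsSentence J) (v : List A) : Bern v (Hd J) = bernH v J := by
  have hcoeff : coeffH ⟨Hd J, Hd_mem_nsym hJ⟩ = Finsupp.single J 1 := by
    classical
    ext K
    change Hd J K = _
    simp [Hd, Finsupp.single_apply, eq_comm]
  rw [Bern_eq_linearCombination (Hd_mem_nsym hJ), hcoeff, Finsupp.linearCombination_single,
    one_smul]

theorem bernH_append_singleton (v w : List A) (J : Sentence A) :
    bernH v (J ++ [w]) = ∑ t ∈ Finset.range (w.length + 1), ∑ Q ∈ segmentations (w.drop t),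
      (-1 : ℚ) ^ Q.length • mulBilin (bernH (v ++ Q.reverse.flatten) J) (Hw (w.take t)) := by
  rw [bernH, sum_splits_append_singleton, Finset.sum_comm]
  refine Finset.sum_congr rfl fun t _ => ?_
  simp only [sum_refinements_flattenWS_append_singleton]
  simp only [bernH, map_sum, LinearMap.sum_apply, map_smul, LinearMap.smul_apply, Finset.smul_sum,
    Hw_eq_Hd_flattenWS, mulBilin_Hd_Hd, ← flattenWS_append, smul_smul, ← pow_add]
  rw [Finset.sum_comm (s := segmentations _)]
  refine Finset.sum_congr rfl fun p _ => ?_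
  rw [Finset.sum_comm]
  simp [add_comm]

theorem bernH_append_flattenWS_singleton (v w : List A) (J : Sentence A) :
    bernH v (J ++ flattenWS [w]) =
      ∑ t ∈ Finset.range (w.length + 1), ∑ Q ∈ segmentations (w.drop t),
        (-1 : ℚ) ^ Q.length • mulBilin (bernH (v ++ Q.reverse.flatten) J) (Hw (w.take t)) := by
  obtain rfl | hw := eq_or_ne w []
  · simp [flattenWS, segmentations_nil, Hw, mulBilin_Hd_nil (bernH_mem_nsym v J)]
  · rw [(isSentence_singleton.2 hw).flattenWS_eq, bernH_append_singleton]

theorem mulBilin_bernH_Hw (v w : List A) (J : Sentence A) :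
    mulBilin (bernH v J) (Hw w) = ∑ t ∈ Finset.range (w.length + 1),
      bernH (v ++ w.drop t) (J ++ flattenWS [w.take t]) := by
  let φ (r : ℕ) (u : List A) : NSymA A := mulBilin (bernH (v ++ u) J) (Hw (w.take r))
  have hexpand : ∀ t ∈ Finset.range (w.length + 1),
      bernH (v ++ w.drop t) (J ++ flattenWS [w.take t]) =
        ∑ r ∈ Finset.range (t + 1), ∑ Q ∈ segmentations ((w.take t).drop r),
          (-1 : ℚ) ^ Q.length • φ r (w.drop t ++ Q.reverse.flatten) := by
    intro t ht
    have htw : t ≤ w.length := Finset.mem_range_succ_iff.1 ht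
    rw [bernH_append_flattenWS_singleton, List.length_take_of_le htw]
    refine Finset.sum_congr rfl fun r hr => ?_
    rw [List.take_take, min_eq_left (Finset.mem_range_succ_iff.1 hr)]
    simp only [φ, List.append_assoc]
  rw [Finset.sum_congr rfl hexpand, Finset.sum_comm' (t' := Finset.range (w.length + 1))
    (s' := fun r => Finset.Ico r (w.length + 1))
    (by intro x y; simp only [Finset.mem_range, Finset.mem_Ico]; omega),
    Finset.sum_range_succ, Finset.sum_eq_zero]
  · simp [segmentations_nil, φ]
  · intro r hr
    rw [Finset.mem_range] at hr
    have hcancel := sum_range_segmentations_eq_zero (φ r) (s := w.drop r) (by simpa using hr)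
    rw [List.length_drop, ← Nat.sub_add_comm hr.le] at hcancel
    rw [Finset.sum_Ico_eq_sum_range, ← hcancel]
    refine Finset.sum_congr rfl fun i _ => ?_
    rw [List.drop_take, List.drop_drop, Nat.add_sub_cancel_left]

theorem mulBilin_Bern_Hw {f : NSymA A} (hf : f ∈ nsym A) (v w : List A) :
    mulBilin (Bern v f) (Hw w) = ∑ t ∈ Finset.range (w.length + 1),
      Bern (v ++ w.drop t) (mulBilin f (Hd (flattenWS [w.take t]))) := by
  have hsent : ∀ J ∈ hf.1.toFinset, IsSentence J := fun J hJ => hf.2 J (by simpa using hJ)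
  have hright : ∀ u K, IsSentence K → Bern u (mulBilin f (Hd K)) =
      ∑ J ∈ hf.1.toFinset, f J • bernH u (J ++ K) := by
    intro u K hK
    have hJK : ∀ J ∈ hf.1.toFinset, IsSentence (J ++ K) := fun J hJ =>
      isSentence_append.2 ⟨hsent J hJ, hK⟩
    conv_lhs => rw [← sum_support_smul_Hd hf]
    simp only [map_sum, map_smul, LinearMap.sum_apply, LinearMap.smul_apply, mulBilin_Hd_Hd]
    rw [Bern_sum _ _ fun J hJ => (nsym A).smul_mem _ (Hd_mem_nsym (hJK J hJ))]
    exact Finset.sum_congr rfl fun J hJ => by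
      rw [Bern_smul (Hd_mem_nsym (hJK J hJ)), Bern_Hd (hJK J hJ)]
  rw [Bern_eq_linearCombination hf, linearCombination_coeffH]
  simp only [map_sum, map_smul, LinearMap.sum_apply, LinearMap.smul_apply, mulBilin_bernH_Hw,
    hright _ _ (isSentence_flattenWS _), Finset.smul_sum]
  exact Finset.sum_comm

end Bernstein

section Growth
variable {A M : Type*} [AddCommMonoid M]

/-- Append `x` to the row of index `k`, opening a new last row if there is no such row. -/
def addAt {α : Type*} : List (List α) → ℕ → α → List (List α)
  | [], _, x => [[x]]
  | r :: rs, 0, x => (r ++ [x]) :: rs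
  | r :: rs, k + 1, x => r :: addAt rs k x

/-- The sum of `φ` over all ways of growing the shape `K` by one box for each `(a, d)` in `l`, where
`a` is the color of the box and `d` tells whether it lies strictly below the previous box. The
number `b` is one more than the row of the last box added so far, or `0` if there is none; `φ` is
evaluated at the final values of `b` and `K`. -/
def growSum (φ : ℕ → Sentence A → M) : ℕ → Sentence A → List (A × Bool) → M
  | b, K, [] => φ b K
  | b, K, (a, d) :: l =>
      ∑ k ∈ Finset.range (K.length + 1) with d = decide (b ≤ k), growSum φ (k + 1) (addAt K k a) l

theorem growSum_append (φ : ℕ → Sentence A → M) (b : ℕ) (K : Sentence A) (l l' : List (A × Bool)) :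
    growSum φ b K (l ++ l') = growSum (fun b K => growSum φ b K l') b K l := by
  induction l generalizing b K with
  | nil => rfl
  | cons p l ih => simp only [List.cons_append, growSum, ih]

/-- Letters without descents: each box is placed weakly above the previous one. -/
def weakFlags (w : List A) : List (A × Bool) := w.map (·, false)

theorem growSum_weakFlags_cons (φ : ℕ → Sentence A → M) (b : ℕ) (K : Sentence A) (a : A)
    (w : List A) :
    growSum φ b K (weakFlags (a :: w)) = ∑ k ∈ Finset.range (K.length + 1) with k < b,
      growSum φ (k + 1) (addAt K k a) (weakFlags w) := by
  simp [weakFlags, growSum]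

theorem growSum_one_weakFlags (φ : Sentence A → M) (v : List A) (K : Sentence A) (w : List A) :
    growSum (fun _ => φ) 1 (v :: K) (weakFlags w) = φ ((v ++ w) :: K) := by
  induction w generalizing v with
  | nil => simp [weakFlags, growSum]
  | cons a w ih => simp [growSum_weakFlags_cons, addAt, ih]

/-- The first row receives the boxes that come last, namely those colored by `w.drop t`. -/
theorem growSum_weakFlags_cons_row (φ : Sentence A → M) (b : ℕ) (v : List A) (K : Sentence A)
    (w : List A) :
    growSum (fun _ => φ) (b + 1) (v :: K) (weakFlags w) = ∑ t ∈ Finset.range (w.length + 1),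
      growSum (fun _ L => φ ((v ++ w.drop t) :: L)) b K (weakFlags (w.take t)) := by
  induction w generalizing b v K with
  | nil => simp [weakFlags, growSum]
  | cons a w ih =>
    rw [growSum_weakFlags_cons, Finset.sum_filter, List.length_cons, List.length_cons,
      Finset.sum_range_succ', Finset.sum_range_succ' _ (w.length + 1)]
    congr 1
    · simp only [add_lt_add_iff_right, addAt, List.take_succ_cons, List.drop_succ_cons, ih,
        growSum_weakFlags_cons, ← Finset.sum_filter]
      exact Finset.sum_comm
    · simp [addAt, growSum_one_weakFlags, show weakFlags ([] : List A) = [] from rfl, growSum]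

end Growth

section Pieri
variable {A : Type*}

theorem growSum_mem_nsym {φ : ℕ → Sentence A → NSymA A} (hφ : ∀ b J, φ b J ∈ nsym A) (b : ℕ)
    (K : Sentence A) (l : List (A × Bool)) : growSum φ b K l ∈ nsym A := by
  induction l generalizing b K with
  | nil => exact hφ b K
  | cons p l ih => exact sum_mem fun k _ => ih _ _

theorem Bern_growSum {φ : ℕ → Sentence A → NSymA A} (hφ : ∀ b J, φ b J ∈ nsym A) (v : List A)
    (b : ℕ) (K : Sentence A) (l : List (A × Bool)) :
    Bern v (growSum φ b K l) = growSum (fun b J => Bern v (φ b J)) b K l := by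
  induction l generalizing b K with
  | nil => rfl
  | cons p l ih =>
    rw [growSum, Bern_sum _ _ fun k _ => growSum_mem_nsym hφ _ _ l]
    simp only [ih, growSum]

theorem ImmS_nil : ImmS ([] : Sentence A) = Hd [] := rfl

theorem ImmS_cons (v : List A) (J : Sentence A) : ImmS (v :: J) = Bern v (ImmS J) := rfl

theorem ImmS_mem_nsym (J : Sentence A) : ImmS J ∈ nsym A := by
  induction J with
  | nil => exact Hd_mem_nsym isSentence_nil
  | cons v J ih => exact Bern_mem_nsym ih v

theorem ImmS_flattenWS_singleton (w : List A) : ImmS (flattenWS [w]) = Hw w := by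
  cases w with
  | nil => rfl
  | cons a w =>
    change Bern (a :: w) (Hd []) = Hd [a :: w]
    rw [Bern_Hd isSentence_nil, bernH]
    simp [sum_splits, splitsOf, flattenWS, refinements_nil]

theorem growSum_nil_weakFlags {M : Type*} [AddCommMonoid M] (φ : Sentence A → M) (w : List A) :
    growSum (fun _ => φ) 1 [] (weakFlags w) = φ (flattenWS [w]) := by
  cases w with
  | nil => rfl
  | cons a w =>
    simp [growSum_weakFlags_cons, addAt, growSum_one_weakFlags, flattenWS]

theorem mulBilin_ImmS_Hw (K : Sentence A) (w : List A) :
    mulBilin (ImmS K) (Hw w) = growSum (fun _ => ImmS) (K.length + 1) K (weakFlags w) := by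
  induction K generalizing w with
  | nil =>
    rw [List.length_nil, growSum_nil_weakFlags, ImmS_nil, ImmS_flattenWS_singleton,
      Hw_eq_Hd_flattenWS, mulBilin_Hd_Hd, List.nil_append]
  | cons v K ih =>
    rw [ImmS_cons, mulBilin_Bern_Hw (ImmS_mem_nsym K), List.length_cons, growSum_weakFlags_cons_row]
    refine Finset.sum_congr rfl fun t _ => ?_
    rw [← Hw_eq_Hd_flattenWS, ih, Bern_growSum fun _ => ImmS_mem_nsym]
    rfl

end Pieri

section Ribbon
variable {A : Type*}

theorem refines_snoc_snoc {C J : Sentence A} {w x : List A} :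
    Refines (C ++ [w]) (J ++ [x]) ↔
      ∃ C₁ C₂, C = C₁ ++ C₂ ∧ C₂.flatten ++ w = x ∧ Refines C₁ J := by
  rw [refines_append_singleton]
  constructor
  · rintro ⟨C₁, C₂, heq, hne, rfl, href⟩
    obtain ⟨D, y, rfl⟩ := C₂.eq_nil_or_concat'.resolve_left hne
    rw [← List.append_assoc] at heq
    obtain ⟨rfl, hy⟩ := List.append_inj' heq rfl
    obtain rfl := List.singleton_inj.1 hy
    exact ⟨C₁, D, rfl, by simp, href⟩
  · rintro ⟨C₁, C₂, rfl, rfl, href⟩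
    exact ⟨C₁, C₂ ++ [w], by simp, by simp, by simp, href⟩

theorem refines_snoc_snoc_right {C J : Sentence A} {u w : List A} :
    Refines (C ++ [u] ++ [w]) J ↔
      (∃ K, Refines (C ++ [u]) K ∧ K ++ [w] = J) ∨ Refines (C ++ [u ++ w]) J := by
  obtain rfl | ⟨J, x, rfl⟩ := J.eq_nil_or_concat'
  · simp [refines_nil_right]
  rw [refines_snoc_snoc, refines_snoc_snoc]
  constructor
  · rintro ⟨C₁, C₂, heq, rfl, href⟩
    obtain rfl | ⟨D, y, rfl⟩ := C₂.eq_nil_or_concat'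
    · rw [List.append_nil] at heq
      exact Or.inl ⟨J, heq ▸ href, by simp⟩
    · rw [← List.append_assoc] at heq
      obtain ⟨rfl, hy⟩ := List.append_inj' heq rfl
      obtain rfl := List.singleton_inj.1 hy
      exact Or.inr ⟨C₁, D, rfl, by simp, href⟩
  · rintro (⟨K, href, heq⟩ | ⟨C₁, C₂, rfl, rfl, href⟩)
    · obtain ⟨rfl, hx⟩ := List.append_inj' heq rfl
      obtain rfl := List.singleton_inj.1 hx
      exact ⟨C ++ [u], [], by simp, by simp, href⟩
    · exact ⟨C₁, C₂ ++ [u], by simp, by simp, href⟩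

theorem not_refines_append_singleton_append {C K : Sentence A} {u w : List A} (hu : u ≠ []) :
    ¬ Refines (C ++ [u ++ w]) (K ++ [w]) := by
  rw [refines_snoc_snoc]
  rintro ⟨C₁, C₂, -, hflat, -⟩
  simp [← List.append_assoc, hu] at hflat

theorem coarsenings_eq_singleton {C : Sentence A} (hC : IsSentence C) (hlen : C.length ≤ 1) :
    {J | Refines C J} = {C} := by
  refine Set.eq_singleton_iff_unique_mem.2 ⟨⟨C.map ([·]), by simp, ?_, ?_⟩, fun J hJ => ?_⟩
  · simp [← List.flatMap_def]
  · simp [Function.comp_def]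
  · have hJC := hJ.length_le
    have hsent := hJ.isSentence hC
    have hflat := hJ.flatten_eq
    match C, J with
    | [], [] => rfl
    | [w], [] => exact absurd hflat.symm (by simpa using isSentence_singleton.1 hC)
    | [w], [x] => simpa using hflat

theorem Rib_of_length_le_one {C : Sentence A} (hC : IsSentence C) (hlen : C.length ≤ 1) :
    Rib C = Hd C := by
  rw [Rib, coarsenings_eq_singleton hC hlen, finsum_mem_singleton]
  simp

theorem IsSentence.merge_last {C : Sentence A} {u w : List A} (hC : IsSentence (C ++ [u] ++ [w])) :
    IsSentence (C ++ [u ++ w]) := by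
  simp only [isSentence_append, isSentence_singleton] at hC ⊢
  exact ⟨hC.1.1, List.append_ne_nil_of_left_ne_nil hC.1.2 w⟩

theorem finsum_mem_coarsenings_snoc_snoc {M : Type*} [AddCommMonoid M] (φ : Sentence A → M)
    {C : Sentence A} {u w : List A} (hC : IsSentence (C ++ [u] ++ [w])) :
    ∑ᶠ J ∈ {J | Refines (C ++ [u] ++ [w]) J}, φ J =
      ∑ᶠ K ∈ {K | Refines (C ++ [u]) K}, φ (K ++ [w]) +
        ∑ᶠ J ∈ {J | Refines (C ++ [u ++ w]) J}, φ J := by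
  obtain ⟨hCu, -⟩ := isSentence_append.1 hC
  have hset : {J | Refines (C ++ [u] ++ [w]) J} =
      (· ++ [w]) '' {K | Refines (C ++ [u]) K} ∪ {J | Refines (C ++ [u ++ w]) J} :=
    Set.ext fun J => refines_snoc_snoc_right
  have hdisj : Disjoint ((· ++ [w]) '' {K | Refines (C ++ [u]) K})
      {J | Refines (C ++ [u ++ w]) J} := by
    rw [Set.disjoint_left]
    rintro _ ⟨K, -, rfl⟩
    exact not_refines_append_singleton_append
      (isSentence_singleton.1 (isSentence_append.1 hCu).2)
  rw [hset, finsum_mem_union hdisj (hCu.finite_coarsenings.image _)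
    hC.merge_last.finite_coarsenings,
    finsum_mem_image fun K _ K' _ h => List.append_cancel_right h]

theorem Rib_add_Rib {C : Sentence A} {u w : List A} (hC : IsSentence (C ++ [u] ++ [w])) :
    Rib (C ++ [u ++ w]) + Rib (C ++ [u] ++ [w]) = mulBilin (Rib (C ++ [u])) (Hw w) := by
  obtain ⟨hCu, hw⟩ := isSentence_append.1 hC
  have hmul : mulBilin (Rib (C ++ [u])) (Hw w) = ∑ᶠ K ∈ {K | Refines (C ++ [u]) K},
      (-1 : ℚ) ^ ((C ++ [u]).length - K.length) • Hd (K ++ [w]) := by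
    refine ((mulBilin.flip (Hw w)).toAddMonoidHom.map_finsum_mem _ hCu.finite_coarsenings).trans ?_
    simp only [LinearMap.toAddMonoidHom_coe, LinearMap.flip_apply, map_smul, Hw_eq_Hd_flattenWS,
      hw.flattenWS_eq, mulBilin_Hd_Hd]
  have hneg : ∀ J ∈ {J | Refines (C ++ [u ++ w]) J},
      (-1 : ℚ) ^ ((C ++ [u] ++ [w]).length - J.length) • Hd J =
        -((-1 : ℚ) ^ ((C ++ [u ++ w]).length - J.length) • Hd J) := by
    intro J hJ
    have hle : J.length ≤ (C ++ [u ++ w]).length := hJ.length_le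
    simp only [List.length_append, List.length_singleton] at hle ⊢
    rw [← neg_smul, Nat.sub_add_comm hle, pow_succ, mul_neg_one]
  rw [hmul, Rib, Rib, finsum_mem_coarsenings_snoc_snoc _ hC, finsum_mem_congr rfl hneg,
    finsum_mem_neg_distrib _ hC.merge_last.finite_coarsenings]
  simp

end Ribbon

section Flags
variable {A : Type*}

/-- The letters of a word, the first of which is flagged. -/
def wordFlags : List A → List (A × Bool)
  | [] => []
  | a :: w => (a, true) :: weakFlags w

/-- The letters of a sentence, each with a flag telling whether it starts a new word. -/
def flags (C : Sentence A) : List (A × Bool) := C.flatMap wordFlags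

theorem flags_append (C D : Sentence A) : flags (C ++ D) = flags C ++ flags D :=
  List.flatMap_append

theorem flags_singleton (w : List A) : flags [w] = wordFlags w := List.flatMap_singleton ..

theorem wordFlags_append {u : List A} (hu : u ≠ []) (w : List A) :
    wordFlags (u ++ w) = wordFlags u ++ weakFlags w := by
  obtain ⟨a, u, rfl⟩ := List.exists_cons_of_ne_nil hu
  simp [wordFlags, weakFlags]

theorem map_growSum {M N : Type*} [AddCommMonoid M] [AddCommMonoid N] (g : M →+ N)
    (φ : ℕ → Sentence A → M) (b : ℕ) (K : Sentence A) (l : List (A × Bool)) :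
    g (growSum φ b K l) = growSum (fun b K => g (φ b K)) b K l := by
  induction l generalizing b K with
  | nil => rfl
  | cons p l ih => simp only [growSum, map_sum, ih]

theorem growSum_add {M : Type*} [AddCommMonoid M] (φ ψ : ℕ → Sentence A → M) (b : ℕ)
    (K : Sentence A) (l : List (A × Bool)) :
    growSum (fun b K => φ b K + ψ b K) b K l = growSum φ b K l + growSum ψ b K l := by
  induction l generalizing b K with
  | nil => rfl
  | cons p l ih => simp only [growSum, ih, Finset.sum_add_distrib]

theorem growSum_weakFlags_add_growSum_wordFlags {M : Type*} [AddCommMonoid M] {w : List A}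
    (hw : w ≠ []) (φ : ℕ → Sentence A → M) (b : ℕ) (K : Sentence A) :
    growSum φ b K (weakFlags w) + growSum φ b K (wordFlags w) =
      growSum φ (K.length + 1) K (weakFlags w) := by
  obtain ⟨a, w, rfl⟩ := List.exists_cons_of_ne_nil hw
  simp only [growSum_weakFlags_cons, wordFlags, growSum]
  rw [Finset.filter_true_of_mem (p := (· < K.length + 1)) fun k hk => Finset.mem_range.1 hk,
    ← Finset.sum_filter_add_sum_filter_not (Finset.range (K.length + 1)) (· < b)]
  simp

theorem growSum_ImmS_add {w : List A} (hw : w ≠ []) (l : List (A × Bool)) :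
    growSum (fun _ => ImmS) 0 [] (l ++ weakFlags w) +
        growSum (fun _ => ImmS) 0 [] (l ++ wordFlags w) =
      mulBilin (growSum (fun _ => ImmS) 0 [] l) (Hw w) := by
  rw [growSum_append, growSum_append, ← growSum_add]
  simp only [growSum_weakFlags_add_growSum_wordFlags hw, ← mulBilin_ImmS_Hw]
  exact (map_growSum (mulBilin.flip (Hw w)).toAddMonoidHom (fun _ => ImmS) 0 [] l).symm

theorem growSum_ImmS_wordFlags (w : List A) :
    growSum (fun _ => ImmS) 0 [] (wordFlags w) = Hw w := by
  rw [← ImmS_flattenWS_singleton]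
  cases w with
  | nil => rfl
  | cons a w => simp [wordFlags, growSum, addAt, growSum_one_weakFlags, flattenWS]

theorem Rib_eq_growSum {C : Sentence A} (hC : IsSentence C) :
    Rib C = growSum (fun _ => ImmS) 0 [] (flags C) := by
  induction hn : C.length generalizing C with
  | zero =>
    obtain rfl := List.length_eq_zero_iff.1 hn
    exact Rib_of_length_le_one hC (by simp)
  | succ n ih =>
    obtain ⟨D, w, rfl⟩ := C.eq_nil_or_concat'.resolve_left (by rintro rfl; simp at hn)
    obtain rfl | ⟨D, u, rfl⟩ := D.eq_nil_or_concat'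
    · rw [List.nil_append] at hC ⊢
      rw [flags_singleton, growSum_ImmS_wordFlags, Hw_eq_Hd_flattenWS, hC.flattenWS_eq,
        Rib_of_length_le_one hC (by simp)]
    · obtain ⟨hDu, hw⟩ := isSentence_append.1 hC
      obtain ⟨-, hu⟩ := isSentence_append.1 hDu
      rw [isSentence_singleton] at hu hw
      have hmerge : Rib (D ++ [u ++ w]) =
          growSum (fun _ => ImmS) 0 [] (flags (D ++ [u]) ++ weakFlags w) := by
        rw [ih hC.merge_last (by simpa using hn), flags_append, flags_append, flags_singleton,
          flags_singleton, wordFlags_append hu, List.append_assoc]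
      refine add_left_cancel (a := Rib (D ++ [u ++ w])) ?_
      rw [Rib_add_Rib hC, ih hDu (by simpa using hn), hmerge, flags_append _ [w], flags_singleton,
        growSum_ImmS_add hw]

end Flags

section Unflag
variable {A : Type*}

/-- One step in recovering a sentence from its flags, read from right to left; the state consists of
the beginning of the current word and the list of the completed words. -/
def unflagStep (p : A × Bool) (s : List A × Sentence A) : List A × Sentence A :=
  if p.2 then ([], (p.1 :: s.1) :: s.2) else (p.1 :: s.1, s.2)

theorem foldr_unflagStep_weakFlags (w : List A) (s : List A × Sentence A) :
    (weakFlags w).foldr unflagStep s = (w ++ s.1, s.2) := by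
  induction w with
  | nil => rfl
  | cons a w ih => simp_all [weakFlags, unflagStep]

theorem foldr_unflagStep_flags {C : Sentence A} (hC : IsSentence C) :
    (flags C).foldr unflagStep ([], []) = ([], C) := by
  induction C with
  | nil => rfl
  | cons w C ih =>
    obtain ⟨hw, hC'⟩ := isSentence_cons.1 hC
    obtain ⟨a, w, rfl⟩ := List.exists_cons_of_ne_nil hw
    change ((wordFlags (a :: w) ++ flags C).foldr unflagStep ([], [])) = _
    rw [List.foldr_append, ih hC', wordFlags, List.foldr_cons, foldr_unflagStep_weakFlags]
    simp [unflagStep]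

theorem flags_injOn : Set.InjOn flags {C : Sentence A | IsSentence C} := fun C hC D hD h => by
  have hfold := foldr_unflagStep_flags hC
  rw [h, foldr_unflagStep_flags hD] at hfold
  exact (congrArg Prod.snd hfold).symm

end Unflag

section Descents
variable {A : Type*}

theorem wordFlags_eq_mapIdx (w : List A) :
    wordFlags w = w.mapIdx fun i c => (c, decide (i = 0)) := by
  cases w with
  | nil => rfl
  | cons a w =>
    refine List.ext_getElem (by simp [wordFlags, weakFlags]) fun i _ _ => ?_
    cases i <;> simp [wordFlags, weakFlags]

theorem length_flags (C : Sentence A) : (flags C).length = size C := by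
  simp [flags, size, List.length_flatMap, wordFlags_eq_mapIdx]

theorem flags_splitByComp {w : List A} {x n : ℕ} {ds : List ℕ}
    (hds : (x :: (ds ++ [n])).Pairwise (· < ·)) (hw : w.length = n - x) :
    flags (splitByComp w (List.zipWith (fun a b => b - a) (x :: ds) (ds ++ [n]))) =
      w.mapIdx fun i c => (c, decide (i = 0 ∨ x + i ∈ ds)) := by
  induction ds generalizing x w with
  | nil => simp [splitByComp, flags_singleton, ← hw, wordFlags_eq_mapIdx]
  | cons d ds ih =>
    obtain ⟨hx, hd⟩ := List.pairwise_cons.1 hds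
    have hxd : x < d := hx d (by simp)
    have hdn : d < n := (List.pairwise_cons.1 hd).1 n (by simp)
    have hdds : ∀ e ∈ ds, d < e := fun e he => (List.pairwise_cons.1 hd).1 e (by simp [he])
    change wordFlags (w.take (d - x)) ++ flags (splitByComp (w.drop (d - x))
      (List.zipWith (fun a b => b - a) (d :: ds) (ds ++ [n]))) = _
    rw [ih hd (by simp only [List.length_drop, hw]; omega), wordFlags_eq_mapIdx]
    conv_rhs => rw [← List.take_append_drop (d - x) w, List.mapIdx_append]
    have hlen : (w.take (d - x)).length = d - x := by rw [List.length_take]; omega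
    congr 1
    · refine List.ext_getElem (by simp) fun i hi _ => ?_
      have hid : x + i < d := by simp only [List.length_mapIdx, hlen] at hi; omega
      have hnds : x + i ∉ ds := fun h => (hdds _ h).not_gt hid
      simp [hid.ne, hnds]
    · refine List.ext_getElem (by simp) fun i _ _ => ?_
      have hxi : x + (i + (d - x)) = d + i := by omega
      have hid : d - x ≠ 0 := by omega
      simp [hlen, hxi, hid]

theorem isSentence_splitByComp {w : List A} {x n : ℕ} {ds : List ℕ}
    (hds : (x :: (ds ++ [n])).Pairwise (· < ·)) (hw : w.length = n - x) :
    IsSentence (splitByComp w (List.zipWith (fun a b => b - a) (x :: ds) (ds ++ [n]))) := by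
  induction ds generalizing x w with
  | nil =>
    have hxn : x < n := by simpa using hds
    simp only [splitByComp, isSentence_singleton, List.nil_append, List.zipWith_cons_cons,
      List.zipWith_nil_right, ← hw, List.take_length, ← List.length_pos_iff]
    omega
  | cons d ds ih =>
    obtain ⟨hx, hd⟩ := List.pairwise_cons.1 hds
    have hxd : x < d := hx d (by simp)
    have hdn : d < n := (List.pairwise_cons.1 hd).1 n (by simp)
    refine isSentence_cons.2 ⟨?_, ih hd (by simp [hw]; omega)⟩
    rw [← List.length_pos_iff, List.length_take, hw]
    exact lt_min (Nat.sub_pos_of_lt hxd) (Nat.sub_pos_of_lt (hxd.trans hdn))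

theorem pairwise_descList {f : Filling} (hf : nBoxes f ≠ 0) :
    (0 :: (descList f ++ [nBoxes f])).Pairwise (· < ·) := by
  have hlt : (descList f).Pairwise (· < ·) := List.Pairwise.filter _ (List.pairwise_lt_range' ..)
  have hmem : ∀ d ∈ descList f, 0 < d ∧ d < nBoxes f := fun d hd => by
    have := List.mem_range'_1.1 (List.mem_of_mem_filter hd)
    omega
  rw [List.pairwise_cons, List.pairwise_append]
  simp only [List.mem_append, List.mem_singleton, forall_eq]
  exact ⟨fun d hd => hd.elim (fun h => (hmem d h).1) (fun h => h ▸ Nat.pos_of_ne_zero hf), hlt,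
    List.pairwise_singleton _ _, fun d hd => (hmem d hd).2⟩

/-- The rows with index at least `rowBound f i` are those strictly below the entry `i`; there is no
restriction for `i = 0`. -/
def rowBound (f : Filling) (i : ℕ) : ℕ := if i = 0 then 0 else rowOf f i + 1

variable [Inhabited A]

theorem isSentence_coA (J : Sentence A) (f : Filling) : IsSentence (coA J f) := by
  rw [coA]
  split_ifs with hf
  · exact isSentence_nil
  · exact isSentence_splitByComp (pairwise_descList hf) (by simp [readWord])

theorem flags_coA (J : Sentence A) (f : Filling) :
    flags (coA J f) = (List.range (nBoxes f)).map fun i =>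
      (colorOf J f (i + 1), decide (rowBound f i ≤ rowOf f (i + 1))) := by
  rw [coA]
  split_ifs with hf
  · simp [hf, flags]
  · rw [compOf, flags_splitByComp (pairwise_descList hf) (by simp [readWord])]
    refine List.ext_getElem (by simp [readWord]) fun i hi _ => ?_
    have hin : i < nBoxes f := by simpa [readWord] using hi
    rcases Nat.eq_zero_or_pos i with rfl | hi0
    · simp [readWord, rowBound]
    · have hmem : i ∈ descList f ↔ rowOf f i < rowOf f (i + 1) := by
        rw [descList, List.mem_filter, List.mem_range'_1, decide_eq_true_eq]
        exact and_iff_right (by omega)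
      simp [readWord, rowBound, hi0.ne', hmem]

end Descents

section AddAt
variable {α : Type*}

theorem flatten_addAt_perm (l : List (List α)) (k : ℕ) (x : α) :
    (addAt l k x).flatten.Perm (x :: l.flatten) := by
  induction l generalizing k with
  | nil => simp [addAt]
  | cons r l ih =>
    cases k with
    | zero => simp [addAt]
    | succ k => exact ((ih k).append_left r).trans List.perm_middle

theorem IsSentence.addAt {l : Sentence α} (hl : IsSentence l) (k : ℕ) (x : α) :
    IsSentence (addAt l k x) := by
  induction l generalizing k with
  | nil => exact isSentence_singleton.2 (List.cons_ne_nil x [])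
  | cons r l ih =>
    obtain ⟨hr, hl'⟩ := isSentence_cons.1 hl
    cases k with
    | zero => exact isSentence_cons.2 ⟨List.append_ne_nil_of_left_ne_nil hr _, hl'⟩
    | succ k => exact isSentence_cons.2 ⟨hr, ih hl' k⟩

theorem flattenWS_modify_addAt {l : Sentence α} (hl : IsSentence l) {k : ℕ} (hk : k ≤ l.length)
    (x : α) : flattenWS ((addAt l k x).modify k List.dropLast) = l := by
  induction l generalizing k with
  | nil => simp_all [addAt, flattenWS]
  | cons r l ih =>
    obtain ⟨hr, hl'⟩ := isSentence_cons.1 hl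
    cases k with
    | zero => simpa [addAt] using hl.flattenWS_eq
    | succ k =>
      have hlen : k ≤ l.length := Nat.le_of_succ_le_succ hk
      simpa [addAt, flattenWS, hr] using ih hl' hlen

theorem addAt_injOn (k : ℕ) (x : α) :
    Set.InjOn (fun l => addAt l k x) {l : Sentence α | IsSentence l ∧ k ≤ l.length} :=
  fun l hl l' hl' h => by
    rw [← flattenWS_modify_addAt hl.1 hl.2 x, ← flattenWS_modify_addAt hl'.1 hl'.2 x]
    exact congrArg (fun m => flattenWS (m.modify k List.dropLast)) h

theorem map_length_addAt {β : Type*} {l : List (List α)} {m : List (List β)}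
    (h : l.map List.length = m.map List.length) (k : ℕ) (x : α) (y : β) :
    (addAt l k x).map List.length = (addAt m k y).map List.length := by
  induction l generalizing m k with
  | nil =>
    obtain rfl : m = [] := by simpa using h.symm
    rfl
  | cons r l ih =>
    obtain ⟨s, m, rfl, hsr, hml⟩ := List.map_eq_cons_iff.1 h.symm
    cases k with
    | zero => simp [addAt, hsr, hml]
    | succ k => simp [addAt, hsr, ih hml.symm]

theorem exists_eq_addAt_of_map_length_eq {β : Type*} {l : List (List α)} {k : ℕ} {x : α}
    {m : List (List β)} (h : (addAt l k x).map List.length = m.map List.length) :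
    ∃ m' y, m = addAt m' k y ∧ l.map List.length = m'.map List.length := by
  induction l generalizing m k with
  | nil =>
    obtain ⟨s, m, rfl, hs, hm⟩ := List.map_eq_cons_iff.1 h.symm
    obtain ⟨y, rfl⟩ := List.length_eq_one_iff.1 hs
    obtain rfl : m = [] := by simpa using hm
    exact ⟨[], y, rfl, rfl⟩
  | cons r l ih =>
    cases k with
    | zero =>
      obtain ⟨s, m, rfl, hs, hm⟩ := List.map_eq_cons_iff.1 h.symm
      obtain ⟨s, y, rfl⟩ := (List.eq_nil_or_concat' s).resolve_left (by rintro rfl; simp at hs)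
      exact ⟨s :: m, y, by simp [addAt], by simp_all⟩
    | succ k =>
      obtain ⟨s, m, rfl, hs, hm⟩ := List.map_eq_cons_iff.1 h.symm
      obtain ⟨m', y, rfl, hm'⟩ := ih hm.symm
      exact ⟨s :: m', y, rfl, by simp [hs, hm']⟩

theorem IsSentence.of_map_length_eq {β : Type*} {l : Sentence α} (hl : IsSentence l)
    {m : Sentence β} (h : l.map List.length = m.map List.length) : IsSentence m := fun w hw => by
  obtain ⟨v, hv, hvw⟩ := List.mem_map.1 (h ▸ List.mem_map_of_mem hw)
  exact List.ne_nil_of_length_pos (hvw ▸ List.length_pos_iff.2 (hl v hv))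

end AddAt

section RowOf
variable {A : Type*} [Inhabited A]

theorem rowOf_cons (r : List ℕ) (f : Filling) (v : ℕ) :
    rowOf (r :: f) v = if v ∈ r then 0 else rowOf f v + 1 := by
  simp [rowOf, List.findIdx_cons, Bool.cond_eq_ite]

theorem rowOf_addAt_of_mem {f : Filling} {k x v : ℕ} (hv : v ∈ f.flatten) (hvx : v ≠ x) :
    rowOf (addAt f k x) v = rowOf f v := by
  induction f generalizing k with
  | nil => simp at hv
  | cons r f ih =>
    cases k with
    | zero => simp [addAt, rowOf_cons, hvx]
    | succ k =>
      simp only [addAt, rowOf_cons]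
      split_ifs with hr
      · rfl
      · rw [ih (by simpa [hr] using hv)]

theorem rowOf_addAt_self {f : Filling} {k x : ℕ} (hx : x ∉ f.flatten) (hk : k ≤ f.length) :
    rowOf (addAt f k x) x = k := by
  induction f generalizing k with
  | nil => simp_all [addAt, rowOf_cons]
  | cons r f ih =>
    obtain ⟨hr, hf⟩ : x ∉ r ∧ x ∉ f.flatten := by simpa using hx
    cases k with
    | zero => simp [addAt, rowOf_cons]
    | succ k => simp [addAt, rowOf_cons, hr, ih hf (Nat.le_of_succ_le_succ hk)]

theorem colorOf_cons (w : List A) (J : Sentence A) (r : List ℕ) (f : Filling) (v : ℕ) :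
    colorOf (w :: J) (r :: f) v =
      if v ∈ r then w.getD (r.findIdx (· == v)) default else colorOf J f v := by
  simp only [colorOf, rowOf_cons]
  split_ifs <;> simp

theorem colorOf_addAt_of_mem {J : Sentence A} {f : Filling} {k x v : ℕ} (a : A)
    (hshape : f.map List.length = J.map List.length) (hv : v ∈ f.flatten) (hvx : v ≠ x) :
    colorOf (addAt J k a) (addAt f k x) v = colorOf J f v := by
  induction f generalizing k J with
  | nil => simp at hv
  | cons r f ih =>
    obtain ⟨w, J, rfl, hwr, hJf⟩ := List.map_eq_cons_iff.1 hshape.symm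
    cases k with
    | zero =>
      by_cases hr : v ∈ r
      · have hlt : r.findIdx (· == v) < r.length := List.findIdx_lt_length.2 ⟨v, hr, by simp⟩
        simp only [addAt, colorOf_cons, List.mem_append, hr, true_or, if_true,
          List.findIdx_append, hlt]
        exact List.getD_append _ _ _ _ (hwr ▸ hlt)
      · simp [addAt, colorOf_cons, hr, hvx]
    | succ k =>
      simp only [addAt, colorOf_cons]
      split_ifs with hr
      · rfl
      · exact ih hJf.symm (by simpa [hr] using hv)

theorem colorOf_addAt_self {J : Sentence A} {f : Filling} {k x : ℕ} (a : A)
    (hshape : f.map List.length = J.map List.length) (hx : x ∉ f.flatten) (hk : k ≤ f.length) :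
    colorOf (addAt J k a) (addAt f k x) x = a := by
  induction f generalizing k J with
  | nil =>
    obtain rfl : J = [] := by simpa using hshape.symm
    simp [addAt, colorOf_cons]
  | cons r f ih =>
    obtain ⟨w, J, rfl, hwr, hJf⟩ := List.map_eq_cons_iff.1 hshape.symm
    obtain ⟨hr, hf⟩ : x ∉ r ∧ x ∉ f.flatten := by simpa using hx
    cases k with
    | zero =>
      have hidx : r.findIdx (· == x) = w.length := by
        rw [hwr, List.findIdx_eq_length]
        exact fun y hy => by simpa using fun h : y = x => hr (h ▸ hy)
      simp [addAt, colorOf_cons, List.findIdx_append, hidx, hwr]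
    | succ k =>
      simp only [addAt, colorOf_cons, if_neg hr]
      exact ih hJf.symm hf (Nat.le_of_succ_le_succ hk)

end RowOf

section StandardTableaux
variable {A : Type*}

/-- Standard colored immaculate tableaux, for shapes without empty rows. -/
structure IsSCIT (J : Sentence A) (f : Filling) : Prop where
  isSentence : IsSentence J
  isCIT : IsCIT J f
  isStandard : IsStandardF f

theorem nBoxes_addAt (f : Filling) (k x : ℕ) : nBoxes (addAt f k x) = nBoxes f + 1 :=
  (flatten_addAt_perm f k x).length_eq

theorem IsStandardF.mem_flatten_iff {f : Filling} (hf : IsStandardF f) {v : ℕ} :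
    v ∈ f.flatten ↔ 1 ≤ v ∧ v ≤ nBoxes f := by
  rw [hf.mem_iff, List.mem_range'_1]
  omega

theorem isStandardF_addAt_iff {f : Filling} {k : ℕ} :
    IsStandardF (addAt f k (nBoxes f + 1)) ↔ IsStandardF f := by
  rw [IsStandardF, nBoxes_addAt, (flatten_addAt_perm f k _).congr_left, List.range'_1_concat,
    (List.perm_append_singleton _ _).congr_right, Nat.add_comm 1, List.perm_cons, IsStandardF]

theorem forall_mem_addAt_pairwise_le_iff {f : Filling} {k x : ℕ} (hx : ∀ y ∈ f.flatten, y ≤ x) :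
    (∀ row ∈ addAt f k x, row.Pairwise (· ≤ ·)) ↔ ∀ row ∈ f, row.Pairwise (· ≤ ·) := by
  induction f generalizing k with
  | nil => simp [addAt]
  | cons r f ih =>
    cases k with
    | zero => simp_all [addAt, List.pairwise_append]
    | succ k =>
      simp only [addAt, List.forall_mem_cons]
      rw [ih fun y hy => hx y (by simp_all)]

theorem filterMap_head?_addAt {f : Filling} (hf : IsSentence f) {k : ℕ} (hk : k ≤ f.length)
    (x : ℕ) : (addAt f k x).filterMap List.head? =
      f.filterMap List.head? ++ if k = f.length then [x] else [] := by
  induction f generalizing k with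
  | nil => simp_all [addAt]
  | cons r f ih =>
    obtain ⟨hr, hf'⟩ := isSentence_cons.1 hf
    obtain ⟨y, r, rfl⟩ := List.exists_cons_of_ne_nil hr
    cases k with
    | zero => simp [addAt]
    | succ k => simp [addAt, ih hf' (Nat.le_of_succ_le_succ hk)]

theorem pairwise_lt_heads_addAt_iff {f : Filling} (hf : IsSentence f) {k x : ℕ}
    (hk : k ≤ f.length) (hx : ∀ y ∈ f.flatten, y < x) :
    ((addAt f k x).filterMap List.head?).Pairwise (· < ·) ↔
      (f.filterMap List.head?).Pairwise (· < ·) := by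
  have hheads : ∀ y ∈ f.filterMap List.head?, y < x := fun y hy => by
    obtain ⟨r, hr, hyr⟩ := List.mem_filterMap.1 hy
    exact hx y (List.mem_flatten_of_mem hr (List.mem_of_mem_head? hyr))
  rw [filterMap_head?_addAt hf hk, List.pairwise_append]
  split_ifs
  · simpa using fun _ => hheads
  · simp

theorem exists_eq_addAt {f : Filling} (hf : IsSentence f)
    (hrows : ∀ row ∈ f, row.Pairwise (· ≤ ·)) (hheads : (f.filterMap List.head?).Pairwise (· < ·))
    {x : ℕ} (hx : x ∈ f.flatten) (hmax : ∀ y ∈ f.flatten, y ≤ x) :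
    ∃ f' k, IsSentence f' ∧ k ≤ f'.length ∧ f = addAt f' k x := by
  induction f with
  | nil => simp at hx
  | cons r f ih =>
    obtain ⟨hr, hf'⟩ := isSentence_cons.1 hf
    obtain ⟨hrow, hrows'⟩ := List.forall_mem_cons.1 hrows
    by_cases hxf : x ∈ f.flatten
    · have hheads' : (f.filterMap List.head?).Pairwise (· < ·) :=
        hheads.sublist ((List.sublist_cons_self r f).filterMap _)
      obtain ⟨f', k, hf'', hk, rfl⟩ := ih hf' hrows' hheads' hxf fun y hy => hmax y (by simp_all)
      exact ⟨r :: f', k + 1, isSentence_cons.2 ⟨hr, hf''⟩, Nat.succ_le_succ hk, rfl⟩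
    · obtain ⟨s, y, rfl⟩ := (List.eq_nil_or_concat' r).resolve_left hr
      have hxr : x ∈ s ∨ x = y := by simpa [hxf] using hx
      obtain rfl : x = y := hxr.elim
        (fun h => le_antisymm ((List.pairwise_append.1 hrow).2.2 x h y (by simp))
          (hmax y (by simp))) id
      rcases s with - | ⟨z, s⟩
      · obtain rfl : f = [] := List.eq_nil_iff_forall_not_mem.2 fun r' hr' => by
          obtain ⟨z, r', rfl⟩ := List.exists_cons_of_ne_nil (hf' r' hr')
          have hxz : x < z := (List.pairwise_cons.1 hheads).1 z
            (List.mem_filterMap.2 ⟨_, hr', rfl⟩)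
          have hzmem : z ∈ ([] ++ [x] ++ f.flatten : List ℕ) :=
            List.mem_append_right _ (List.mem_flatten.2 ⟨_, hr', List.mem_cons_self⟩)
          exact hxz.not_ge (hmax z (by simpa using hzmem))
        exact ⟨[], 0, isSentence_nil, le_rfl, rfl⟩
      · exact ⟨(z :: s) :: f, 0, isSentence_cons.2 ⟨List.cons_ne_nil z s, hf'⟩, Nat.zero_le _, rfl⟩

theorem isCIT_iff_of_isStandardF {J : Sentence A} {f : Filling} (hf : IsStandardF f) :
    IsCIT J f ↔ f.map List.length = J.map List.length ∧ (∀ row ∈ f, row.Pairwise (· ≤ ·)) ∧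
      (f.filterMap List.head?).Pairwise (· < ·) := by
  constructor
  · rintro ⟨hshape, hrows, hheads, -⟩
    exact ⟨hshape, fun r hr => (hrows r hr).pairwise, hheads.pairwise⟩
  · rintro ⟨hshape, hrows, hheads⟩
    exact ⟨hshape, fun r hr => (hrows r hr).isChain, hheads.isChain,
      fun v hv => (hf.mem_flatten_iff.1 hv).1⟩

theorem IsStandardF.isCIT_addAt_iff {J : Sentence A} {f : Filling} (hf : IsStandardF f)
    (hJ : IsSentence J) (hshape : f.map List.length = J.map List.length) {k : ℕ}
    (hk : k ≤ J.length) (a : A) :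
    IsCIT (addAt J k a) (addAt f k (nBoxes f + 1)) ↔ IsCIT J f := by
  have hlen : f.length = J.length := by simpa using congrArg List.length hshape
  have hlt : ∀ v ∈ f.flatten, v < nBoxes f + 1 := fun v hv =>
    Nat.lt_succ_of_le (hf.mem_flatten_iff.1 hv).2
  rw [isCIT_iff_of_isStandardF hf, isCIT_iff_of_isStandardF (isStandardF_addAt_iff.2 hf),
    forall_mem_addAt_pairwise_le_iff fun v hv => (hlt v hv).le,
    pairwise_lt_heads_addAt_iff (hJ.of_map_length_eq hshape.symm) (hlen ▸ hk) hlt]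
  simp only [hshape, map_length_addAt hshape k _ a]

theorem IsSCIT.length_eq {J : Sentence A} {f : Filling} (h : IsSCIT J f) : f.length = J.length := by
  simpa using congrArg List.length h.isCIT.1

theorem IsSCIT.isSentence_filling {J : Sentence A} {f : Filling} (h : IsSCIT J f) : IsSentence f :=
  h.isSentence.of_map_length_eq h.isCIT.1.symm

theorem IsSCIT.size_eq {J : Sentence A} {f : Filling} (h : IsSCIT J f) : size J = nBoxes f := by
  rw [size, ← h.isCIT.1, nBoxes, List.length_flatten]

theorem IsSCIT.addAt {J : Sentence A} {f : Filling} (h : IsSCIT J f) {k : ℕ} (hk : k ≤ J.length)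
    (a : A) : IsSCIT (addAt J k a) (addAt f k (nBoxes f + 1)) where
  isSentence := h.isSentence.addAt k a
  isCIT := (h.isStandard.isCIT_addAt_iff h.isSentence h.isCIT.1 hk a).2 h.isCIT
  isStandard := isStandardF_addAt_iff.2 h.isStandard

theorem IsSCIT.exists_eq_addAt {J : Sentence A} {f : Filling} (h : IsSCIT J f)
    (hn : nBoxes f ≠ 0) : ∃ J' f' k a, IsSCIT J' f' ∧ k ≤ J'.length ∧
      J = ColoredImm.addAt J' k a ∧ f = ColoredImm.addAt f' k (nBoxes f' + 1) := by
  obtain ⟨hJ, hCIT, hstd⟩ := h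
  obtain ⟨hshape, hrows, hheads⟩ := (isCIT_iff_of_isStandardF hstd).1 hCIT
  obtain ⟨f', k, hf', hk, hf⟩ := ColoredImm.exists_eq_addAt (hJ.of_map_length_eq hshape.symm)
    hrows hheads (hstd.mem_flatten_iff.2 ⟨Nat.one_le_iff_ne_zero.2 hn, le_rfl⟩)
    fun v hv => (hstd.mem_flatten_iff.1 hv).2
  have hbox : nBoxes f = nBoxes f' + 1 := by rw [hf, nBoxes_addAt]
  rw [hbox] at hf
  subst hf
  obtain ⟨J', a, rfl, hshape'⟩ := exists_eq_addAt_of_map_length_eq hshape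
  have hstd' : IsStandardF f' := isStandardF_addAt_iff.1 hstd
  have hJ' : IsSentence J' := hf'.of_map_length_eq hshape'
  have hkJ : k ≤ J'.length := by
    rwa [← List.length_map List.length, ← hshape', List.length_map]
  exact ⟨J', f', k, a, ⟨hJ', (hstd'.isCIT_addAt_iff hJ' hshape' hkJ a).1 hCIT, hstd'⟩, hkJ,
    rfl, rfl⟩

/-- Grow a tableau by a box colored `a` in row `k`, filled with the next entry. -/
def grow (a : A) (T : Sentence A × Filling) (k : ℕ) : Sentence A × Filling :=
  (addAt T.1 k a, addAt T.2 k (nBoxes T.2 + 1))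

theorem rowOf_grow {a : A} {T : Sentence A × Filling} (hT : IsSCIT T.1 T.2) {k : ℕ}
    (hk : k ≤ T.1.length) : rowOf (grow a T k).2 (nBoxes T.2 + 1) = k :=
  rowOf_addAt_self (by simp [hT.isStandard.mem_flatten_iff]) (hT.length_eq ▸ hk)

theorem eq_of_grow_eq {a : A} {T T' : Sentence A × Filling} (hT : IsSCIT T.1 T.2)
    (hT' : IsSCIT T'.1 T'.2) {k k' : ℕ} (hk : k ≤ T.1.length) (hk' : k' ≤ T'.1.length)
    (h : grow a T k = grow a T' k') : T = T' ∧ k = k' := by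
  have hbox : nBoxes T.2 = nBoxes T'.2 := by
    simpa [grow, nBoxes_addAt] using congrArg (fun S => nBoxes S.2) h
  obtain rfl : k = k' := by rw [← rowOf_grow hT hk, h, hbox, rowOf_grow hT' hk']
  obtain ⟨hJ, hf⟩ := Prod.mk.inj h
  rw [← hbox] at hf
  exact ⟨Prod.ext (addAt_injOn k a ⟨hT.isSentence, hk⟩ ⟨hT'.isSentence, hk'⟩ hJ)
    (addAt_injOn k _ ⟨hT.isSentence_filling, hT.length_eq ▸ hk⟩
      ⟨hT'.isSentence_filling, hT'.length_eq ▸ hk'⟩ hf), rfl⟩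

end StandardTableaux

section Enumeration
variable {A : Type*} [Inhabited A]

theorem rowBound_addAt {f : Filling} (hf : IsStandardF f) {k i : ℕ} (hi : i ≤ nBoxes f) :
    rowBound (addAt f k (nBoxes f + 1)) i = rowBound f i := by
  rcases Nat.eq_zero_or_pos i with rfl | hi0
  · rfl
  · simp only [rowBound]
    rw [rowOf_addAt_of_mem (hf.mem_flatten_iff.2 ⟨hi0, hi⟩) (by omega)]

theorem flags_coA_addAt {J : Sentence A} {f : Filling} (h : IsSCIT J f) {k : ℕ}
    (hk : k ≤ J.length) (a : A) :
    flags (coA (addAt J k a) (addAt f k (nBoxes f + 1))) =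
      flags (coA J f) ++ [(a, decide (rowBound f (nBoxes f) ≤ k))] := by
  have hnew : nBoxes f + 1 ∉ f.flatten := by simp [h.isStandard.mem_flatten_iff]
  rw [flags_coA, flags_coA, nBoxes_addAt, List.range_succ, List.map_append, List.map_singleton,
    rowOf_addAt_self hnew (h.length_eq ▸ hk),
    colorOf_addAt_self a h.isCIT.1 hnew (h.length_eq ▸ hk), rowBound_addAt h.isStandard le_rfl]
  congr 1
  refine List.map_congr_left fun i hi => ?_
  have hin : i < nBoxes f := List.mem_range.1 hi
  have hmem : i + 1 ∈ f.flatten := h.isStandard.mem_flatten_iff.2 ⟨by omega, hin⟩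
  rw [rowOf_addAt_of_mem hmem (by omega), colorOf_addAt_of_mem a h.isCIT.1 hmem (by omega),
    rowBound_addAt h.isStandard hin.le]

/-- The standard colored immaculate tableaux, as pairs of shape and filling, whose colored descent
composition has the flags `l`. -/
def sCITs (l : List (A × Bool)) : Set (Sentence A × Filling) :=
  {T | IsSCIT T.1 T.2 ∧ flags (coA T.1 T.2) = l}

theorem nBoxes_of_mem_sCITs {l : List (A × Bool)} {T : Sentence A × Filling} (hT : T ∈ sCITs l) :
    nBoxes T.2 = l.length := by
  simpa [flags_coA] using congrArg List.length hT.2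

theorem sCITs_nil : sCITs ([] : List (A × Bool)) = {([], [])} := by
  ext ⟨J, f⟩
  constructor
  · intro hT
    have hf : f.flatten = [] := List.length_eq_zero_iff.1 (nBoxes_of_mem_sCITs hT)
    obtain rfl : f = [] := hT.1.isSentence_filling.eq_nil_of_flatten_eq_nil hf
    obtain rfl : J = [] := List.length_eq_zero_iff.1 hT.1.length_eq.symm
    rfl
  · rintro ⟨rfl, rfl⟩
    exact ⟨⟨isSentence_nil, ⟨rfl, by simp, List.IsChain.nil, by simp⟩, List.Perm.nil⟩, rfl⟩

/-- The rows in which a tableau may be grown, where `d` tells whether its last entry becomes a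
descent. -/
def growRows (d : Bool) (T : Sentence A × Filling) : Finset ℕ :=
  {k ∈ Finset.range (T.1.length + 1) | d = decide (rowBound T.2 (nBoxes T.2) ≤ k)}

theorem sCITs_snoc (l : List (A × Bool)) (a : A) (d : Bool) :
    sCITs (l ++ [(a, d)]) = ⋃ T ∈ sCITs l, grow a T '' growRows d T := by
  ext ⟨J, f⟩
  simp only [Set.mem_iUnion, Set.mem_image, exists_prop]
  constructor
  · intro hT
    have hn : nBoxes f ≠ 0 := by simp [nBoxes_of_mem_sCITs hT]
    obtain ⟨J', f', k, b, h', hk, rfl, rfl⟩ := hT.1.exists_eq_addAt hn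
    have hflags := hT.2
    rw [flags_coA_addAt h' hk] at hflags
    obtain ⟨hl, hbd⟩ := List.append_inj' hflags rfl
    obtain ⟨rfl, rfl⟩ : b = a ∧ _ = d := by simpa using hbd
    exact ⟨(J', f'), ⟨h', hl⟩, k, by simpa [growRows] using hk, rfl⟩
  · rintro ⟨T, ⟨h, rfl⟩, k, hk, hT⟩
    obtain ⟨hkT, rfl⟩ : k ≤ T.1.length ∧ d = _ := by simpa [growRows, Nat.lt_succ_iff] using hk
    obtain ⟨rfl, rfl⟩ := Prod.mk.inj hT
    exact ⟨h.addAt hkT a, flags_coA_addAt h hkT a⟩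

theorem finite_sCITs (l : List (A × Bool)) : (sCITs l).Finite := by
  induction l using List.reverseRecOn with
  | nil => rw [sCITs_nil]; exact Set.finite_singleton _
  | append_singleton l p ih =>
    rw [sCITs_snoc]
    exact ih.biUnion fun T _ => (growRows p.2 T).finite_toSet.image _

theorem finsum_sCITs_snoc {M : Type*} [AddCommMonoid M] (φ : Sentence A × Filling → M)
    (l : List (A × Bool)) (a : A) (d : Bool) :
    ∑ᶠ T ∈ sCITs (l ++ [(a, d)]), φ T = ∑ᶠ T ∈ sCITs l, ∑ k ∈ growRows d T, φ (grow a T k) := by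
  have hle : ∀ {T : Sentence A × Filling} {k}, k ∈ growRows d T → k ≤ T.1.length := fun hk =>
    Nat.lt_succ_iff.1 (Finset.mem_range.1 (Finset.mem_filter.1 hk).1)
  have hdisj : (sCITs l).PairwiseDisjoint fun T => grow a T '' growRows d T := by
    refine fun T hT T' hT' hne => Set.disjoint_left.2 ?_
    rintro _ ⟨k, hk, rfl⟩ ⟨k', hk', h⟩
    exact hne (eq_of_grow_eq hT.1 hT'.1 (hle hk) (hle hk') h.symm).1
  rw [sCITs_snoc, finsum_mem_biUnion hdisj (finite_sCITs l)
    fun T _ => (growRows d T).finite_toSet.image _]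
  refine finsum_mem_congr rfl fun T hT => ?_
  rw [finsum_mem_image fun k hk k' hk' h => (eq_of_grow_eq hT.1 hT.1 (hle hk) (hle hk') h).2,
    finsum_mem_coe_finset]

theorem finsum_sCITs_eq_growSum {M : Type*} [AddCommMonoid M] (φ : ℕ → Sentence A → M)
    (l : List (A × Bool)) :
    ∑ᶠ T ∈ sCITs l, φ (rowBound T.2 (nBoxes T.2)) T.1 = growSum φ 0 [] l := by
  induction l using List.reverseRecOn generalizing φ with
  | nil => simp [sCITs_nil, growSum, nBoxes, rowBound]
  | append_singleton l p ih =>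
    rw [growSum_append, ← ih, finsum_sCITs_snoc]
    refine finsum_mem_congr rfl fun T hT => Finset.sum_congr rfl fun k hk => ?_
    have hkT : k ≤ T.1.length :=
      Nat.lt_succ_iff.1 (Finset.mem_range.1 (Finset.mem_filter.1 hk).1)
    have hbound : rowBound (grow p.1 T k).2 (nBoxes (grow p.1 T k).2) = k + 1 := by
      rw [rowBound, if_neg (by simp [grow, nBoxes_addAt]), grow, nBoxes_addAt]
      exact congrArg (· + 1) (rowOf_grow hT.1 hkT)
    rw [hbound]
    rfl

end Enumeration

section Counting
variable {A : Type*} [Inhabited A]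

theorem size_eq_of_mem_sCITs_flags {C : Sentence A} {T : Sentence A × Filling}
    (hT : T ∈ sCITs (flags C)) : size T.1 = size C := by
  rw [hT.1.size_eq, nBoxes_of_mem_sCITs hT, length_flags]

theorem LJC_eq_ncard {J C : Sentence A} (hJ : IsSentence J) (hC : IsSentence C) :
    LJC J C = {T ∈ sCITs (flags C) | T.1 = J}.ncard := by
  have himage : {T ∈ sCITs (flags C) | T.1 = J} =
      Prod.mk J '' {f | IsCIT J f ∧ IsStandardF f ∧ coA J f = C} := by
    ext ⟨K, f⟩
    simp only [Set.mem_image, Set.mem_ofPred_eq]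
    constructor
    · rintro ⟨⟨h, hflags⟩, rfl⟩
      exact ⟨f, ⟨h.isCIT, h.isStandard, flags_injOn (isSentence_coA K f) hC hflags⟩, rfl⟩
    · rintro ⟨g, ⟨hCIT, hstd, hco⟩, hg⟩
      obtain ⟨rfl, rfl⟩ := Prod.mk.inj hg
      exact ⟨⟨⟨hJ, hCIT, hstd⟩, congrArg flags hco⟩, rfl⟩
  rw [himage, Set.ncard_image_of_injective _ (Prod.mk_right_injective J), LJC]

theorem finsum_mem_eq_finsum_mem_ncard_smul {α β M : Type*} [AddCommMonoid M] {s : Set α}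
    (hs : s.Finite) {t : Set β} {π : α → β} (hπ : Set.MapsTo π s t) (φ : β → M) :
    ∑ᶠ x ∈ s, φ (π x) = ∑ᶠ y ∈ t, {x ∈ s | π x = y}.ncard • φ y := by
  classical
  lift s to Finset α using hs
  have hcard : ∀ y, {x ∈ (s : Set α) | π x = y}.ncard = (s.filter (π · = y)).card := fun y => by
    rw [← Set.ncard_coe_finset, Finset.coe_filter]
    rfl
  have hsupp : t ∩ Function.support (fun y => {x ∈ (s : Set α) | π x = y}.ncard • φ y) ⊆
      s.image π := by
    rintro y ⟨-, hy⟩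
    by_contra hys
    have hfiber : s.filter (π · = y) = ∅ := Finset.filter_eq_empty_iff.2 fun x hx hxy =>
      hys (Finset.mem_coe.2 (Finset.mem_image.2 ⟨x, hx, hxy⟩))
    exact hy (by simp only [hcard, hfiber, Finset.card_empty, zero_smul])
  rw [finsum_mem_coe_finset, Finset.sum_comp φ π,
    finsum_mem_eq_sum_of_subset _ hsupp (by simpa using hπ.image_subset)]
  simp only [hcard]

end Counting

/-- The colored ribbon function expands positively into the colored
immaculate basis: `R_C = Σ_J L_{J,C} 𝔖_J`, summed over all sentences `J` with `|J| = |C|`. -/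
theorem statement15 {A : Type*} [Inhabited A] (C : Sentence A) (hC : IsSentence C) :
    Rib C =
      ∑ᶠ J ∈ {J : Sentence A | IsSentence J ∧ size J = size C}, (LJC J C : ℚ) • ImmS J := by
  have hmaps : Set.MapsTo Prod.fst (sCITs (flags C)) {J | IsSentence J ∧ size J = size C} :=
    fun _ hT => ⟨hT.1.isSentence, size_eq_of_mem_sCITs_flags hT⟩
  calc Rib C = growSum (fun _ => ImmS) 0 [] (flags C) := Rib_eq_growSum hC
    _ = ∑ᶠ T ∈ sCITs (flags C), ImmS T.1 := (finsum_sCITs_eq_growSum _ _).symm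
    _ = ∑ᶠ J ∈ {J | IsSentence J ∧ size J = size C},
          {T ∈ sCITs (flags C) | T.1 = J}.ncard • ImmS J :=
        finsum_mem_eq_finsum_mem_ncard_smul (finite_sCITs _) hmaps ImmS
    _ = ∑ᶠ J ∈ {J | IsSentence J ∧ size J = size C}, (LJC J C : ℚ) • ImmS J :=
        finsum_mem_congr rfl fun J hJ => by
          rw [← LJC_eq_ncard hJ.1 hC, Nat.cast_smul_eq_nsmul]

end ColoredImm
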